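/- arXiv:2211.01597 — 4 statements merged into one kernel-verified Lean document; each statement's English description precedes it below -/
import Mathlib

section
/- Let P be the set of primes p with p ≡ −3 (mod 8), and let A be the set of integers of the form (8j+1)(8k−3)(8l−3)(8m−3)(8n−3) where j,k ∈ ℤ, the numbers 8l−3, 8m−3, 8n−3 are primes in P, and j ≢ k+l+m+n (mod 2). Then S(C_4^2) = { 16m+1 : m ∈ ℤ } ∪ { 2^15 · p · (2m+1) : p ∈ P, m ∈ ℤ } ∪ { 2^16 · m : m ∈ ℤ } ∪ A. -/
open Matrix Complex

def groupDet4x4 (a : ZMod 4 × ZMod 4 → ℤ) : ℤ :=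
  Matrix.det (Matrix.of fun g h : ZMod 4 × ZMod 4 => a (g - h))

def S44 : Set ℤ := Set.range groupDet4x4

def Pset : Set ℤ := {p : ℤ | Prime p ∧ 0 < p ∧ p ≡ -3 [ZMOD 8]}

def Aset : Set ℤ :=
  {x : ℤ | ∃ j k l m n : ℤ, (8*l - 3) ∈ Pset ∧ (8*m - 3) ∈ Pset ∧ (8*n - 3) ∈ Pset ∧
    ¬ (j ≡ k + l + m + n [ZMOD 2]) ∧
    x = (8*j + 1) * (8*k - 3) * (8*l - 3) * (8*m - 3) * (8*n - 3)}

/-!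
Diagonalising by characters, the determinant is the product of the 16 Fourier coefficients of `a`.
Grouping the characters by their restriction to the subgroup `2 • C₄²` splits it into four factors
`E`, `G`, `H`, `K`, each a polynomial in four integers: `E` is a determinant of the Klein four-group
and `G`, `H`, `K` are products of two norms from the Gaussian integers. The four quadruples are the
entrywise Hadamard transform of the values of `a`, so they may be prescribed freely up to
congruences modulo 2 and 4; in particular they all agree modulo 2.

The value is then controlled by this common parity vector. With exactly one odd entry the product is
1 modulo 16. With exactly three, each of `G`, `H`, `K` is a sum of two squares congruent to 5
modulo 8, hence has a prime factor congruent to 5 modulo 8, and the product is 9 modulo 16.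
Otherwise the product is divisible by `2 ^ 15`, and the congruences modulo 4 force either another
factor 2 or a prime factor congruent to 5 modulo 8. Explicit quadruples attain all these values.
-/

section CirculantDeterminant

theorem circulant_mulVec_addChar {G R : Type*} [AddCommGroup G] [Fintype G] [CommRing R]
    (a : G → R) (χ : AddChar G R) : circulant a *ᵥ χ = (∑ u, a u * χ (-u)) • ⇑χ := by
  ext g
  simp only [mulVec, dotProduct, circulant_apply, Pi.smul_apply, smul_eq_mul, Finset.sum_mul]
  rw [← Equiv.sum_comp (Equiv.subLeft g)]
  refine Finset.sum_congr rfl fun u _ => ?_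
  rw [Equiv.subLeft_apply, sub_sub_cancel, sub_eq_neg_add, AddChar.map_add_eq_mul, mul_assoc]

theorem det_circulant_eq_prod_addChar {G : Type*} [AddCommGroup G] [Fintype G] [DecidableEq G]
    (a : G → ℂ) : (circulant a).det = ∏ χ : AddChar G ℂ, ∑ u, a u * χ u := by
  classical
  have hdiag : LinearMap.toMatrix (AddChar.complexBasis G) (AddChar.complexBasis G)
      (toLin' (circulant a)) = diagonal fun χ : AddChar G ℂ => ∑ u, a u * χ (-u) := by
    ext χ ψ
    have hψ : (AddChar.complexBasis G).repr ψ = Finsupp.single ψ 1 := by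
      rw [← (AddChar.complexBasis G).repr_self ψ, AddChar.complexBasis_apply]
    rw [LinearMap.toMatrix_apply, AddChar.complexBasis_apply, toLin'_apply,
      circulant_mulVec_addChar, map_smul, hψ, Finsupp.smul_single_one, Finsupp.single_apply,
      diagonal_apply]
    grind
  rw [← LinearMap.det_toLin', ← LinearMap.det_toMatrix (AddChar.complexBasis G), hdiag,
    det_diagonal]
  exact Equiv.prod_comp (Equiv.inv (AddChar G ℂ)) fun χ : AddChar G ℂ => ∑ u, a u * χ u

variable {R S : Type*} [CommRing R] [CommRing S]

/-- The character `(x, y) ↦ ψ (s x) φ (t y)` of the additive group of `R × S`. -/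
def prodMulShift (ψ : AddChar R ℂ) (φ : AddChar S ℂ) (s : R × S) : AddChar (R × S) ℂ :=
  (ψ.mulShift s.1).compAddMonoidHom (AddMonoidHom.fst R S) *
    (φ.mulShift s.2).compAddMonoidHom (AddMonoidHom.snd R S)

theorem prodMulShift_apply (ψ : AddChar R ℂ) (φ : AddChar S ℂ) (s u : R × S) :
    prodMulShift ψ φ s u = ψ (s.1 * u.1) * φ (s.2 * u.2) := rfl

theorem prodMulShift_injective {ψ : AddChar R ℂ} {φ : AddChar S ℂ} (hψ : ψ.IsPrimitive)
    (hφ : φ.IsPrimitive) : Function.Injective (prodMulShift ψ φ) := by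
  refine fun s t hst => Prod.ext (AddChar.to_mulShift_inj_of_isPrimitive hψ ?_)
    (AddChar.to_mulShift_inj_of_isPrimitive hφ ?_)
  · ext x
    simpa [prodMulShift_apply] using DFunLike.congr_fun hst (x, 0)
  · ext y
    simpa [prodMulShift_apply] using DFunLike.congr_fun hst (0, y)

theorem det_circulant_prod [Fintype R] [Fintype S] [DecidableEq R] [DecidableEq S]
    {ψ : AddChar R ℂ} {φ : AddChar S ℂ} (hψ : ψ.IsPrimitive) (hφ : φ.IsPrimitive)
    (a : R × S → ℂ) :
    (circulant a).det = ∏ s, ∏ t, ∑ u, a u * (ψ (s * u.1) * φ (t * u.2)) := by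
  have hbij : Function.Bijective (prodMulShift ψ φ) :=
    (Fintype.bijective_iff_injective_and_card _).2
      ⟨prodMulShift_injective hψ hφ, AddChar.card_eq.symm⟩
  rw [det_circulant_eq_prod_addChar, ← hbij.prod_comp, Fintype.prod_prod_type]
  rfl

end CirculantDeterminant

section Blocks

variable {R : Type*} [CommRing R]

/-- The group determinant of the Klein four-group, factored over its four characters. -/
def kleinForm (a b c d : R) : R :=
  (a + b + c + d) * (a + b - c - d) * (a - b + c - d) * (a - b - c + d)

/-- The product of the norms of the Gaussian integers `(a + c) + (b + d) i` and
`(a - c) + (b - d) i`: the contribution to the determinant of four characters whose restriction to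
`2 • C₄²` is one and the same nontrivial character. -/
def gaussForm (a b c d : R) : R :=
  ((a + c) ^ 2 + (b + d) ^ 2) * ((a - c) ^ 2 + (b - d) ^ 2)

theorem kleinForm_right_comm (a b c d : R) : kleinForm a b c d = kleinForm a c b d := by
  unfold kleinForm; ring

theorem kleinForm_rotate_right (a b c d : R) : kleinForm a b c d = kleinForm a d b c := by
  unfold kleinForm; ring

theorem gaussForm_swap_right (a b c d : R) : gaussForm a b c d = gaussForm a d c b := by
  unfold gaussForm; ring

theorem gaussForm_eq_sq_add_sq (a b c d : R) : gaussForm a b c d =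
    (a ^ 2 - b ^ 2 - c ^ 2 + d ^ 2) ^ 2 + (2 * (a * b - c * d)) ^ 2 := by
  unfold gaussForm; ring

theorem gaussForm_eq_sq_sub_sq (a b c d : R) : gaussForm a b c d =
    (a ^ 2 + b ^ 2 + c ^ 2 + d ^ 2) ^ 2 - 4 * (a * c + b * d) ^ 2 := by
  unfold gaussForm; ring

theorem kleinForm_eq_gaussForm_sub (a b c d : R) : kleinForm a b c d =
    gaussForm a b c d - 4 * ((a * b - c * d) ^ 2 + (a * d - b * c) ^ 2) := by
  unfold kleinForm gaussForm; ring

/-- The sums of `a` over the four cosets of `2 • C₄²`, weighted by the character of that subgroup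
with value `ε` at `(2, 0)` and `δ` at `(0, 2)`. The cosets are numbered so that `^^^` on `Fin 4` is
addition in the quotient group. -/
def block (a : ZMod 4 × ZMod 4 → R) (ε δ : R) (i : Fin 4) : R :=
  let c : ZMod 4 × ZMod 4 := ![(0, 0), (0, 1), (1, 0), (1, 1)] i
  a c + ε * a (c + (2, 0)) + δ * a (c + (0, 2)) + ε * δ * a (c + (2, 2))

theorem exists_block_eq (q r s t : Fin 4 → R) :
    ∃ a : ZMod 4 × ZMod 4 → R, ∀ ε δ i,
      block a ε δ i = q i + ε * r i + δ * s i + ε * δ * t i := by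
  refine ⟨fun u => (![![q 0, q 1, s 0, s 1], ![q 2, q 3, s 2, s 3], ![r 0, r 1, t 0, t 1],
    ![r 2, r 3, t 2, t 3]] : Fin 4 → Fin 4 → R) u.1 u.2, fun ε δ i => ?_⟩
  fin_cases i <;> rfl

/-- The Fourier coefficient of `a` at the character `(x, y) ↦ z ^ x * w ^ y` of `C₄²`, which is
well defined when `z` and `w` are fourth roots of unity. -/
def fourierSum (a : ZMod 4 × ZMod 4 → R) (z w : R) : R := ∑ u, a u * (z ^ u.1.val * w ^ u.2.val)

theorem fourierSum_eq_block (a : ZMod 4 × ZMod 4 → R) {z w ε δ : R} (hz : z ^ 2 = ε)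
    (hw : w ^ 2 = δ) : fourierSum a z w =
      block a ε δ 0 + w * block a ε δ 1 + z * block a ε δ 2 + z * w * block a ε δ 3 := by
  have sum_eq (f : ZMod 4 → R) : ∑ x, f x = f 0 + f 1 + f 2 + f 3 := Fin.sum_univ_four f
  have h12 : (1 + 2 : ZMod 4) = 3 := rfl
  have h1 : (1 : ZMod 4).val = 1 := rfl
  have h2 : (2 : ZMod 4).val = 2 := rfl
  have h3 : (3 : ZMod 4).val = 3 := rfl
  subst hz hw
  simp only [fourierSum, Fintype.sum_prod_type, sum_eq, block, ZMod.val_zero, h1, h2, h3, pow_zero,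
    pow_one, mul_one, one_mul, cons_val, Prod.mk_add_mk, zero_add, add_zero, h12]
  ring

theorem fourierSum_mul_neg (a : ZMod 4 × ZMod 4 → R) {z w ε δ : R} (hz : z ^ 2 = ε)
    (hw : w ^ 2 = δ) :
    fourierSum a z w * fourierSum a z (-w) * fourierSum a (-z) w * fourierSum a (-z) (-w) =
      (block a ε δ 0 ^ 2 - δ * block a ε δ 1 ^ 2 + ε * block a ε δ 2 ^ 2 -
        ε * δ * block a ε δ 3 ^ 2) ^ 2 -
      4 * ε * (block a ε δ 0 * block a ε δ 2 - δ * (block a ε δ 1 * block a ε δ 3)) ^ 2 := by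
  have hz' : (-z) ^ 2 = ε := by rw [neg_sq, hz]
  have hw' : (-w) ^ 2 = δ := by rw [neg_sq, hw]
  rw [fourierSum_eq_block a hz hw, fourierSum_eq_block a hz hw', fourierSum_eq_block a hz' hw,
    fourierSum_eq_block a hz' hw', ← hz, ← hw]
  ring

/-- The group determinant of `C₄²` as a polynomial in the blocks `e`, `g`, `h`, `k` for the sign
pairs `(1, 1)`, `(1, -1)`, `(-1, 1)`, `(-1, -1)`. In each Gaussian form the first and third
arguments are the entries whose coefficient in the Fourier sums is `±1`, the other two those where
it is `±i`. -/
def blockDet (e g h k : Fin 4 → R) : R :=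
  kleinForm (e 0) (e 1) (e 2) (e 3) * gaussForm (g 0) (g 1) (g 2) (g 3) *
    gaussForm (h 0) (h 2) (h 1) (h 3) * gaussForm (k 0) (k 1) (-k 3) (k 2)

theorem blockDet_xor (e g h k : Fin 4 → R) (i : Fin 4) :
    blockDet (fun j => e (i ^^^ j)) (fun j => g (i ^^^ j)) (fun j => h (i ^^^ j))
      (fun j => k (i ^^^ j)) = blockDet e g h k := by
  unfold blockDet kleinForm gaussForm
  refine congrArg₂ _ (congrArg₂ _ (congrArg₂ _ ?_ ?_) ?_) ?_ <;> fin_cases i <;> simp <;> ring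

theorem blockDet_swap (e g h k : Fin 4 → R) : blockDet (e ∘ Equiv.swap 1 2) (h ∘ Equiv.swap 1 2)
    (g ∘ Equiv.swap 1 2) (k ∘ Equiv.swap 1 2) = blockDet e g h k := by
  have h1 : Equiv.swap (1 : Fin 4) 2 1 = 2 := rfl
  have h2 : Equiv.swap (1 : Fin 4) 2 2 = 1 := rfl
  have h0 : Equiv.swap (1 : Fin 4) 2 0 = 0 := rfl
  have h3 : Equiv.swap (1 : Fin 4) 2 3 = 3 := rfl
  simp only [blockDet, Function.comp_apply, h0, h1, h2, h3]
  rw [kleinForm_right_comm, gaussForm_swap_right (k 0)]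
  ring

theorem prod_fourierSum_eq_blockDet {i : R} (hi : i ^ 2 = -1) (a : ZMod 4 × ZMod 4 → R) :
    ∏ s : Fin 4, ∏ t : Fin 4, fourierSum a (i ^ s.val) (i ^ t.val) =
      blockDet (block a 1 1) (block a 1 (-1)) (block a (-1) 1) (block a (-1) (-1)) := by
  have hi3 : i ^ 3 = -i := by rw [pow_succ, hi, neg_one_mul]
  have h1 : (1 : R) ^ 2 = 1 := one_pow 2
  have group_by_sign (f : R → R → R) :
      ∏ s : Fin 4, ∏ t : Fin 4, f (i ^ s.val) (i ^ t.val) =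
        (f 1 1 * f 1 (-1) * f (-1) 1 * f (-1) (-1)) *
        (f 1 i * f 1 (-i) * f (-1) i * f (-1) (-i)) *
        (f i 1 * f i (-1) * f (-i) 1 * f (-i) (-1)) *
        (f i i * f i (-i) * f (-i) i * f (-i) (-i)) := by
    simp only [Fin.prod_univ_four, Fin.coe_ofNat_eq_mod, Nat.reduceMod, pow_zero, pow_one, hi, hi3]
    ring
  rw [group_by_sign, fourierSum_mul_neg a h1 h1, fourierSum_mul_neg a h1 hi,
    fourierSum_mul_neg a hi h1, fourierSum_mul_neg a hi hi]
  simp only [blockDet, kleinForm, gaussForm]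
  refine congrArg₂ _ (congrArg₂ _ (congrArg₂ _ ?_ ?_) ?_) ?_ <;> ring

end Blocks

theorem groupDet4x4_eq_blockDet (a : ZMod 4 × ZMod 4 → ℤ) :
    groupDet4x4 a =
      blockDet (block a 1 1) (block a 1 (-1)) (block a (-1) 1) (block a (-1) (-1)) := by
  let ψ := AddChar.zmodChar 4 I_pow_four
  have hψ : ψ.IsPrimitive := AddChar.zmodChar_primitive_of_primitive_root 4 isPrimitiveRoot_I
  have hpow (s u : ZMod 4) : ψ (s * u) = (I ^ s.val) ^ u.val := by
    rw [← AddChar.zmodChar_apply I_pow_four, ← AddChar.map_nsmul_eq_pow, nsmul_eq_mul,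
      ZMod.natCast_zmod_val, mul_comm]
  let b : ZMod 4 × ZMod 4 → ℂ := fun u => a u
  have hdet : (groupDet4x4 a : ℂ) = (circulant b).det := by rw [groupDet4x4, Int.cast_det]; rfl
  rw [← Int.cast_inj (α := ℂ), hdet, det_circulant_prod hψ hψ]
  simp only [hpow]
  refine (prod_fourierSum_eq_blockDet I_sq b).trans ?_
  simp [blockDet, kleinForm, gaussForm, block, b]

theorem exists_hadamard_iff {e g h k : ℤ} :
    (∃ q r s t, e = q + r + s + t ∧ g = q + r - s - t ∧ h = q - r + s - t ∧ k = q - r - s + t) ↔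
      g % 2 = e % 2 ∧ h % 2 = e % 2 ∧ 4 ∣ e + g + h + k := by
  constructor
  · rintro ⟨q, r, s, t, rfl, rfl, rfl, rfl⟩
    omega
  · intro _
    exact ⟨(e + g + h + k) / 4, (e + g - h - k) / 4, (e - g + h - k) / 4, (e - g - h + k) / 4,
      by omega⟩

/-- The congruences characterising the quadruples of blocks of integer-valued functions on `C₄²`;
they force `k` as well to be congruent to `e` modulo 2. -/
def Compatible (e g h k : Fin 4 → ℤ) : Prop :=
  ∀ i, g i % 2 = e i % 2 ∧ h i % 2 = e i % 2 ∧ 4 ∣ e i + g i + h i + k i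

theorem mem_S44_iff {x : ℤ} :
    x ∈ S44 ↔ ∃ e g h k, Compatible e g h k ∧ x = blockDet e g h k := by
  constructor
  · rintro ⟨a, rfl⟩
    refine ⟨_, _, _, _, fun i => ?_, groupDet4x4_eq_blockDet a⟩
    simp only [block]
    omega
  · rintro ⟨e, g, h, k, hc, rfl⟩
    choose q r s t he hg hh hk using fun i => exists_hadamard_iff.2 (hc i)
    obtain ⟨a, ha⟩ := exists_block_eq q r s t
    refine ⟨a, ?_⟩
    rw [groupDet4x4_eq_blockDet]
    congr 1 <;> funext i <;> rw [ha]
    · rw [he]; ring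
    · rw [hg]; ring
    · rw [hh]; ring
    · rw [hk]; ring

/-! ### Primes congruent to 5 modulo 8 -/

theorem exists_prime_dvd_of_isSquare_neg_one {m : ℕ} (hsq : IsSquare (-1 : ZMod m))
    (hm : m % 8 = 5) : ∃ p : ℕ, p.Prime ∧ p ∣ m ∧ p % 8 = 5 := by
  have hodd {n : ℕ} (h : n % 2 = 1) : jacobiSym 2 n = ZMod.χ₈ n :=
    jacobiSym.at_two (Nat.odd_iff.2 h)
  have hJ : jacobiSym 2 m = -1 := by
    rw [hodd (by omega), ZMod.χ₈_nat_eq_if_mod_eight, if_neg (by omega), if_neg (by omega)]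
  obtain ⟨p, hp, hpm, hJp⟩ := jacobiSym.eq_neg_one_at_prime_divisor_of_eq_neg_one hJ
  have hp2 : p % 2 = 1 := by
    have := (Nat.odd_iff.2 (by omega : m % 2 = 1)).of_dvd_nat hpm
    exact Nat.odd_iff.1 this
  rw [hodd hp2, ZMod.χ₈_nat_eq_if_mod_eight] at hJp
  have hp4 : p % 4 ≠ 3 := Nat.mod_four_ne_three_of_mem_primeFactors_of_isSquare_neg_one
    (Nat.mem_primeFactors.2 ⟨hp, hpm, by omega⟩) hsq
  exact ⟨p, hp, hpm, by grind⟩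

theorem eight_dvd_sq_sub_one {a : ℤ} (ha : a % 2 = 1) : 8 ∣ a ^ 2 - 1 :=
  Int.eight_dvd_sq_sub_one_of_odd (Int.odd_iff.2 ha)

theorem eight_dvd_sq_sub_two_mul {a : ℤ} (ha : a % 2 = 0) : 8 ∣ a ^ 2 - 2 * a := by
  obtain ⟨n, rfl⟩ := Int.dvd_of_emod_eq_zero ha
  obtain ⟨m, hm⟩ := (Int.even_mul_pred_self n).two_dvd
  exact ⟨m, by linear_combination 4 * hm⟩

theorem natCast_mem_Pset_iff {p : ℕ} : (p : ℤ) ∈ Pset ↔ p.Prime ∧ p % 8 = 5 := by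
  rw [Pset, Set.mem_ofPred_eq, ← Nat.prime_iff_prime_int, Int.ModEq]
  exact ⟨fun h => ⟨h.1, by omega⟩, fun h => ⟨h.1, by exact_mod_cast h.1.pos, by omega⟩⟩

theorem exists_mem_Pset_dvd_of_sq_add_sq {n a b : ℤ} (hn : n = a ^ 2 + b ^ 2) (h5 : n % 8 = 5) :
    ∃ p ∈ Pset, p ∣ n := by
  lift n to ℕ using hn ▸ by positivity
  have hsum : n = a.natAbs ^ 2 + b.natAbs ^ 2 := by
    zify
    simpa only [sq_abs] using hn
  obtain ⟨r, m, rfl, hsq⟩ := Nat.eq_sq_add_sq_iff_eq_sq_mul.1 ⟨_, _, hsum⟩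
  have hr : r % 2 = 1 := by
    by_contra hr
    obtain ⟨s, rfl⟩ : 2 ∣ r := by omega
    rw [show (((2 * s) ^ 2 * m : ℕ) : ℤ) = 4 * (s ^ 2 * m : ℕ) by push_cast; ring] at h5
    omega
  have hm : m % 8 = 5 := by
    obtain ⟨t, ht⟩ := eight_dvd_sq_sub_one (a := r) (by omega)
    rw [show ((r ^ 2 * m : ℕ) : ℤ) = 8 * (t * m) + m by push_cast; linear_combination m * ht] at h5
    omega
  obtain ⟨p, hp, hpm, hp8⟩ := exists_prime_dvd_of_isSquare_neg_one hsq hm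
  exact ⟨p, natCast_mem_Pset_iff.2 ⟨hp, hp8⟩, Int.natCast_dvd_natCast.2 (hpm.mul_left _)⟩

theorem exists_normalized_sq_add_sq {n a b : ℤ} (hn : n = a ^ 2 + b ^ 2) (h5 : n % 8 = 5) :
    ∃ x y : ℤ, n = x ^ 2 + y ^ 2 ∧ (x % 8 = 1 ∨ x % 8 = 3) ∧ y % 8 = 2 := by
  wlog ha : a % 2 = 1 generalizing a b
  · refine this (hn.trans (add_comm _ _)) ?_
    by_contra hb
    have := eight_dvd_sq_sub_two_mul (a := a) (by omega)
    have := eight_dvd_sq_sub_two_mul (a := b) (by omega)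
    omega
  have hb : b % 8 = 2 ∨ b % 8 = 6 := by
    have := eight_dvd_sq_sub_one ha
    rcases Int.emod_two_eq b with hb | hb
    · have := eight_dvd_sq_sub_two_mul hb
      omega
    · have := eight_dvd_sq_sub_one hb
      omega
  have hx : ∃ x, x ^ 2 = a ^ 2 ∧ (x % 8 = 1 ∨ x % 8 = 3) := by
    by_cases h : a % 8 = 1 ∨ a % 8 = 3
    · exact ⟨a, rfl, h⟩
    · exact ⟨-a, neg_sq a, by omega⟩
  have hy : ∃ y, y ^ 2 = b ^ 2 ∧ y % 8 = 2 := by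
    rcases hb with h | h
    · exact ⟨b, rfl, h⟩
    · exact ⟨-b, neg_sq b, by omega⟩
  obtain ⟨x, hxa, hx8⟩ := hx
  obtain ⟨y, hyb, hy8⟩ := hy
  exact ⟨x, y, by rw [hn, hxa, hyb], hx8, hy8⟩

theorem exists_sq_add_sq_of_mem_Pset {p : ℤ} (hp : p ∈ Pset) : ∃ a b : ℤ, p = a ^ 2 + b ^ 2 := by
  lift p to ℕ using hp.2.1.le
  obtain ⟨hprime, h8⟩ := natCast_mem_Pset_iff.1 hp
  have : Fact p.Prime := ⟨hprime⟩
  obtain ⟨a, b, hab⟩ := Nat.Prime.sq_add_sq (p := p) (by omega)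
  exact ⟨a, b, by exact_mod_cast hab.symm⟩

theorem emod_eight_of_mem_Pset {p : ℤ} (hp : p ∈ Pset) : p % 8 = 5 := hp.2.2

theorem emod_eight_of_mul_emod_eight {p q r n : ℤ} (hp : p ∈ Pset) (hq : q ∈ Pset)
    (hr : r ∈ Pset) (h1 : p * q * r * n % 8 = 1) : n % 8 = 5 := by
  have h : p * q * r * n % 8 = -3 * -3 * -3 * n % 8 :=
    ((hp.2.2.mul hq.2.2).mul hr.2.2).mul_right n
  omega

theorem mem_Aset_iff {x : ℤ} :
    x ∈ Aset ↔ x % 16 = 9 ∧ ∃ p ∈ Pset, ∃ q ∈ Pset, ∃ r ∈ Pset, p * q * r ∣ x := by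
  have mod_sixteen (j k l m n : ℤ) : (8 * j + 1) * (8 * k - 3) * (8 * l - 3) * (8 * m - 3) *
      (8 * n - 3) % 16 = (1 + 8 * (j + k + l + m + n)) % 16 := by
    ring_nf
    omega
  constructor
  · rintro ⟨j, k, l, m, n, hl, hm, hn, hne, rfl⟩
    refine ⟨?_, _, hl, _, hm, _, hn, (8 * j + 1) * (8 * k - 3), by ring⟩
    rw [Int.ModEq] at hne
    rw [mod_sixteen]
    omega
  · rintro ⟨h9, p, hp, q, hq, r, hr, c, rfl⟩
    have eq_sub_three {n : ℤ} (hn : n % 8 = 5) : ∃ l, n = 8 * l - 3 := ⟨(n + 3) / 8, by omega⟩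
    obtain ⟨k, rfl⟩ := eq_sub_three (emod_eight_of_mul_emod_eight (n := c) hp hq hr (by omega))
    obtain ⟨l, rfl⟩ := eq_sub_three (emod_eight_of_mem_Pset hp)
    obtain ⟨m, rfl⟩ := eq_sub_three (emod_eight_of_mem_Pset hq)
    obtain ⟨n, rfl⟩ := eq_sub_three (emod_eight_of_mem_Pset hr)
    have hx : (8 * l - 3) * (8 * m - 3) * (8 * n - 3) * (8 * k - 3) =
        (8 * 0 + 1) * (8 * k - 3) * (8 * l - 3) * (8 * m - 3) * (8 * n - 3) := by ring
    rw [hx, mod_sixteen] at h9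
    exact ⟨0, k, l, m, n, hp, hq, hr, by rw [Int.ModEq]; omega, hx⟩

/-! ### Congruences for the two forms -/

section IntegerForms

variable {a b c d : ℤ}

theorem eight_dvd_sq_sub_sq (ha : a % 2 = 1) (hb : b % 2 = 1) : 8 ∣ a ^ 2 - b ^ 2 := by
  have := eight_dvd_sq_sub_one ha
  have := eight_dvd_sq_sub_one hb
  omega

theorem four_dvd_sq_sub_sq (hab : a % 2 = b % 2) : 4 ∣ a ^ 2 - b ^ 2 := by
  have hadd : 2 ∣ a + b := by omega
  have hsub : 2 ∣ a - b := by omega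
  exact sq_sub_sq a b ▸ mul_dvd_mul hadd hsub

theorem four_dvd_sq_add_sq (ha : a % 2 = 0) (hb : b % 2 = 0) : 4 ∣ a ^ 2 + b ^ 2 := by
  have := eight_dvd_sq_sub_two_mul ha
  have := eight_dvd_sq_sub_two_mul hb
  omega

theorem two_dvd_sq_add_sq (hab : a % 2 = b % 2) : 2 ∣ a ^ 2 + b ^ 2 := by
  have := four_dvd_sq_sub_sq hab
  omega

theorem gaussForm_emod_of_one_odd (ha : a % 2 = 1) (hb : b % 2 = 0) (hc : c % 2 = 0)
    (hd : d % 2 = 0) : gaussForm a b c d % 16 = (1 + 4 * (b + c + d)) % 16 := by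
  obtain ⟨m, hm⟩ : 8 ∣ a ^ 2 + b ^ 2 + c ^ 2 + d ^ 2 - (1 + 2 * (b + c + d)) := by
    have := eight_dvd_sq_sub_one ha
    have := eight_dvd_sq_sub_two_mul hb
    have := eight_dvd_sq_sub_two_mul hc
    have := eight_dvd_sq_sub_two_mul hd
    omega
  obtain ⟨n, hn⟩ : 2 ∣ a * c + b * d :=
    Int.dvd_of_emod_eq_zero (by simp [Int.add_emod, Int.mul_emod, hb, hc])
  obtain ⟨s, hs⟩ : 2 ∣ b + c + d := by omega
  rw [gaussForm_eq_sq_sub_sq, hn, sub_eq_iff_eq_add.1 hm, hs]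
  ring_nf
  omega

theorem kleinForm_emod_of_one_odd (ha : a % 2 = 1) (hb : b % 2 = 0) (hc : c % 2 = 0)
    (hd : d % 2 = 0) : kleinForm a b c d % 16 = (1 + 4 * (b + c + d)) % 16 := by
  have h4 : 4 ∣ (a * b - c * d) ^ 2 + (a * d - b * c) ^ 2 :=
    four_dvd_sq_add_sq (by simp [Int.sub_emod, Int.mul_emod, hb, hc])
      (by simp [Int.sub_emod, Int.mul_emod, hb, hd])
  rw [kleinForm_eq_gaussForm_sub, ← gaussForm_emod_of_one_odd ha hb hc hd]
  omega

theorem gaussForm_emod_of_three_odd (ha : a % 2 = 0) (hb : b % 2 = 1) (hc : c % 2 = 1)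
    (hd : d % 2 = 1) : gaussForm a b c d % 16 = (5 + 4 * a) % 16 := by
  obtain ⟨m, hm⟩ : 8 ∣ a ^ 2 + b ^ 2 + c ^ 2 + d ^ 2 - (3 + 2 * a) := by
    have := eight_dvd_sq_sub_two_mul ha
    have := eight_dvd_sq_sub_one hb
    have := eight_dvd_sq_sub_one hc
    have := eight_dvd_sq_sub_one hd
    omega
  obtain ⟨n, hn⟩ : 8 ∣ (a * c + b * d) ^ 2 - 1 :=
    eight_dvd_sq_sub_one (by simp [Int.add_emod, Int.mul_emod, ha, hb, hd])
  obtain ⟨s, rfl⟩ := Int.dvd_of_emod_eq_zero ha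
  rw [gaussForm_eq_sq_sub_sq, sub_eq_iff_eq_add.1 hm, sub_eq_iff_eq_add.1 hn]
  ring_nf
  omega

theorem kleinForm_emod_of_three_odd (ha : a % 2 = 0) (hb : b % 2 = 1) (hc : c % 2 = 1)
    (hd : d % 2 = 1) : kleinForm a b c d % 16 = (13 + 4 * a) % 16 := by
  have := gaussForm_emod_of_three_odd ha hb hc hd
  have := eight_dvd_sq_sub_one (a := a * b - c * d) (by
    simp [Int.sub_emod, Int.mul_emod, ha, hc, hd])
  have := eight_dvd_sq_sub_one (a := a * d - b * c) (by
    simp [Int.sub_emod, Int.mul_emod, ha, hb, hc])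
  rw [kleinForm_eq_gaussForm_sub]
  omega

theorem kleinForm_dvd_of_two_odd (ha : a % 2 = 1) (hb : b % 2 = 1) (hc : c % 2 = 0)
    (hd : d % 2 = 0) : 2 ^ 6 ∣ kleinForm a b c d ∧
      ((c + d) % 4 = 2 → 2 ^ 7 ∣ kleinForm a b c d) := by
  obtain ⟨m, rfl⟩ := Int.odd_iff.2 ha
  obtain ⟨n, rfl⟩ := Int.odd_iff.2 hb
  obtain ⟨s, rfl⟩ := Int.dvd_of_emod_eq_zero hc
  obtain ⟨t, rfl⟩ := Int.dvd_of_emod_eq_zero hd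
  have h : kleinForm (2 * m + 1) (2 * n + 1) (2 * s) (2 * t) =
      2 ^ 4 * (((m + n + 1) ^ 2 - (s + t) ^ 2) * ((m - n) ^ 2 - (s - t) ^ 2)) := by
    unfold kleinForm; ring
  rw [h, show (2 : ℤ) ^ 6 = 2 ^ 4 * 4 by rfl, show (2 : ℤ) ^ 7 = 2 ^ 4 * 8 by rfl]
  by_cases hp : (m - n) % 2 = (s - t) % 2
  · exact ⟨mul_dvd_mul_left _ ((four_dvd_sq_sub_sq hp).mul_left _), fun _ =>
      mul_dvd_mul_left _ ((eight_dvd_sq_sub_sq (by omega) (by omega)).mul_left _)⟩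
  · exact ⟨mul_dvd_mul_left _ ((four_dvd_sq_sub_sq (by omega)).mul_right _), fun _ =>
      mul_dvd_mul_left _ ((eight_dvd_sq_sub_sq (by omega) (by omega)).mul_right _)⟩

theorem gaussForm_dvd_of_opposite_odd (ha : a % 2 = 1) (hb : b % 2 = 0) (hc : c % 2 = 1)
    (hd : d % 2 = 0) : 2 ^ 5 ∣ gaussForm a b c d ∧
      ((b + d) % 4 = 0 → 2 ^ 6 ∣ gaussForm a b c d) := by
  obtain ⟨m, rfl⟩ := Int.odd_iff.2 ha
  obtain ⟨n, rfl⟩ := Int.odd_iff.2 hc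
  obtain ⟨s, rfl⟩ := Int.dvd_of_emod_eq_zero hb
  obtain ⟨t, rfl⟩ := Int.dvd_of_emod_eq_zero hd
  have h : gaussForm (2 * m + 1) (2 * s) (2 * n + 1) (2 * t) =
      2 ^ 4 * (((m + n + 1) ^ 2 + (s + t) ^ 2) * ((m - n) ^ 2 + (s - t) ^ 2)) := by
    unfold gaussForm; ring
  rw [h, show (2 : ℤ) ^ 5 = 2 ^ 4 * 2 by rfl, show (2 : ℤ) ^ 6 = 2 ^ 4 * 4 by rfl]
  by_cases hp : (m - n) % 2 = (s - t) % 2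
  · exact ⟨mul_dvd_mul_left _ ((two_dvd_sq_add_sq hp).mul_left _), fun _ =>
      mul_dvd_mul_left _ ((four_dvd_sq_add_sq (by omega) (by omega)).mul_left _)⟩
  · exact ⟨mul_dvd_mul_left _ ((two_dvd_sq_add_sq (by omega)).mul_right _), fun _ =>
      mul_dvd_mul_left _ ((four_dvd_sq_add_sq (by omega) (by omega)).mul_right _)⟩

theorem gaussForm_dvd_of_adjacent_odd (ha : a % 2 = 1) (hb : b % 2 = 1) (hc : c % 2 = 0)
    (hd : d % 2 = 0) : 2 ^ 2 ∣ gaussForm a b c d ∧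
      ((c + d) % 4 = 2 → ∃ p ∈ Pset, 2 ^ 2 * p ∣ gaussForm a b c d) := by
  obtain ⟨n, hn⟩ : 2 ∣ a ^ 2 - b ^ 2 - c ^ 2 + d ^ 2 := by
    have := four_dvd_sq_sub_sq (ha.trans hb.symm)
    have := four_dvd_sq_sub_sq (hc.trans hd.symm)
    omega
  have hU : gaussForm a b c d = 2 ^ 2 * (n ^ 2 + (a * b - c * d) ^ 2) := by
    rw [gaussForm_eq_sq_add_sq, hn]
    ring
  refine ⟨hU ▸ dvd_mul_right _ _, fun h2 => ?_⟩
  have hodd : (a * b - c * d) % 2 = 1 := by simp [Int.sub_emod, Int.mul_emod, ha, hb, hc]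
  have hn4 : n % 4 = 2 := by
    have := eight_dvd_sq_sub_sq ha hb
    have := eight_dvd_sq_sub_two_mul hc
    have := eight_dvd_sq_sub_two_mul hd
    omega
  have h5 : (n ^ 2 + (a * b - c * d) ^ 2) % 8 = 5 := by
    have := eight_dvd_sq_sub_one hodd
    have := eight_dvd_sq_sub_two_mul (a := n) (by omega)
    omega
  obtain ⟨p, hp, hdvd⟩ := exists_mem_Pset_dvd_of_sq_add_sq rfl h5
  exact ⟨p, hp, hU ▸ mul_dvd_mul_left _ hdvd⟩

theorem gaussForm_dvd_of_emod_two_eq {r : ℤ} (ha : a % 2 = r) (hb : b % 2 = r) (hc : c % 2 = r)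
    (hd : d % 2 = r) : 2 ^ 4 ∣ gaussForm a b c d :=
  mul_dvd_mul (a := 4) (c := 4) (four_dvd_sq_add_sq (by omega) (by omega))
    (four_dvd_sq_add_sq (by omega) (by omega))

theorem kleinForm_dvd_of_emod_two_eq {r : ℤ} (ha : a % 2 = r) (hb : b % 2 = r) (hc : c % 2 = r)
    (hd : d % 2 = r) : 2 ^ 4 ∣ kleinForm a b c d := by
  have h₁ : 2 ∣ a + b + c + d := by omega
  have h₂ : 2 ∣ a + b - c - d := by omega
  have h₃ : 2 ∣ a - b + c - d := by omega
  have h₄ : 2 ∣ a - b - c + d := by omega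
  exact mul_dvd_mul (mul_dvd_mul (mul_dvd_mul h₁ h₂) h₃) h₄

theorem mul_emod_sixteen {α β x y E F : ℤ} (hα : α % 2 = 1) (hβ : β % 2 = 1)
    (hx : x % 2 = 0) (hy : y % 2 = 0) (hE : E % 16 = (α + 4 * x) % 16)
    (hF : F % 16 = (β + 4 * y) % 16) : E * F % 16 = (α * β + 4 * (x + y)) % 16 := by
  refine (Int.ModEq.mul hE hF).trans (Int.modEq_iff_dvd.2 ?_)
  obtain ⟨m, hm⟩ : 2 ∣ 1 - α := by omega
  obtain ⟨n, hn⟩ : 2 ∣ 1 - β := by omega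
  obtain ⟨u, rfl⟩ := Int.dvd_of_emod_eq_zero hx
  obtain ⟨v, rfl⟩ := Int.dvd_of_emod_eq_zero hy
  exact ⟨n * u + m * v - 4 * u * v, by linear_combination 8 * u * hn + 8 * v * hm⟩

theorem prod_emod_sixteen {α β x y z w E G H K : ℤ} (hα : α % 2 = 1) (hβ : β % 2 = 1)
    (hx : x % 2 = 0) (hy : y % 2 = 0) (hz : z % 2 = 0) (hw : w % 2 = 0)
    (hE : E % 16 = (α + 4 * x) % 16) (hG : G % 16 = (β + 4 * y) % 16)
    (hH : H % 16 = (β + 4 * z) % 16) (hK : K % 16 = (β + 4 * w) % 16) :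
    E * G * H * K % 16 = (α * β * β * β + 4 * (x + y + z + w)) % 16 := by
  have hEG := mul_emod_sixteen hα hβ hx hy hE hG
  have hEGH := mul_emod_sixteen (by simp [Int.mul_emod, hα, hβ]) hβ (by omega) hz hEG hH
  exact mul_emod_sixteen (by simp [Int.mul_emod, hα, hβ]) hβ (by omega) hw hEGH hK

end IntegerForms

/-! ### Values on compatible blocks -/

/-- The even values of the determinant: multiples of `2 ^ 16`, and multiples of `2 ^ 15 * p` for
some `p ∈ Pset`. -/
def evenValues : Set ℤ := {x | 2 ^ 16 ∣ x ∨ ∃ p ∈ Pset, 2 ^ 15 * p ∣ x}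

theorem mem_evenValues_iff {x : ℤ} : x ∈ evenValues ↔
    (∃ p ∈ Pset, ∃ m, x = 2 ^ 15 * p * (2 * m + 1)) ∨ ∃ m, x = 2 ^ 16 * m := by
  constructor
  · rintro (h16 | ⟨p, hp, m, rfl⟩)
    · exact .inr h16
    · obtain ⟨n, rfl | rfl⟩ := m.even_or_odd'
      · exact .inr ⟨p * n, by ring⟩
      · exact .inl ⟨p, hp, n, rfl⟩
  · rintro (⟨p, hp, m, hm⟩ | h16)
    · exact .inr ⟨p, hp, 2 * m + 1, hm⟩
    · exact .inl h16

-- `E` is the Klein factor, and `F` the Gaussian factor whose two odd entries are opposite;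
-- `s`, `t`, `u`, `v` are the sums of the two even entries of `E`, `F`, `U`, `V`. If neither `E` nor
-- `F` gains a factor 2, then `s + t` is 2 modulo 4, hence so is `u + v`.
theorem mul_mem_evenValues {E F U V s t u v : ℤ}
    (hE : 2 ^ 6 ∣ E ∧ (s % 4 = 2 → 2 ^ 7 ∣ E)) (hF : 2 ^ 5 ∣ F ∧ (t % 4 = 0 → 2 ^ 6 ∣ F))
    (hU : 2 ^ 2 ∣ U ∧ (u % 4 = 2 → ∃ p ∈ Pset, 2 ^ 2 * p ∣ U))
    (hV : 2 ^ 2 ∣ V ∧ (v % 4 = 2 → ∃ p ∈ Pset, 2 ^ 2 * p ∣ V))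
    (hs : s % 2 = 0) (ht : t % 2 = 0) (hu : u % 2 = 0) (hv : v % 2 = 0)
    (hsum : 4 ∣ s + t + u + v) : E * F * (U * V) ∈ evenValues := by
  have hUV : 2 ^ 4 ∣ U * V := mul_dvd_mul (a := 2 ^ 2) hU.1 hV.1
  by_cases hs2 : s % 4 = 2
  · exact .inl (mul_dvd_mul (a := 2 ^ 12) (mul_dvd_mul (a := 2 ^ 7) (hE.2 hs2) hF.1) hUV)
  by_cases ht0 : t % 4 = 0
  · exact .inl (mul_dvd_mul (a := 2 ^ 12) (mul_dvd_mul (a := 2 ^ 6) hE.1 (hF.2 ht0)) hUV)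
  have hEF : 2 ^ 11 ∣ E * F := mul_dvd_mul (a := 2 ^ 6) hE.1 hF.1
  rcases (by omega : u % 4 = 2 ∨ v % 4 = 2) with hu2 | hv2
  · obtain ⟨p, hp, hpU⟩ := hU.2 hu2
    refine .inr ⟨p, hp, ?_⟩
    calc 2 ^ 15 * p = 2 ^ 11 * (2 ^ 2 * p * 2 ^ 2) := by ring
      _ ∣ E * F * (U * V) := mul_dvd_mul hEF (mul_dvd_mul hpU hV.1)
  · obtain ⟨p, hp, hpV⟩ := hV.2 hv2
    refine .inr ⟨p, hp, ?_⟩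
    calc 2 ^ 15 * p = 2 ^ 11 * (2 ^ 2 * (2 ^ 2 * p)) := by ring
      _ ∣ E * F * (U * V) := mul_dvd_mul hEF (mul_dvd_mul hU.1 hpV)

/-- The vector of residues modulo two of the entries of `e`, in `{0, 1}`. -/
def parity (e : Fin 4 → ℤ) : Fin 4 → ℤ := fun i => e i % 2

theorem parity_eq_iff {e : Fin 4 → ℤ} {a b c d : ℤ} : parity e = ![a, b, c, d] ↔
    e 0 % 2 = a ∧ e 1 % 2 = b ∧ e 2 % 2 = c ∧ e 3 % 2 = d := by
  simp [funext_iff, Fin.forall_fin_succ, parity]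

theorem exists_parity_xor_eq (e : Fin 4 → ℤ) : ∃ i : Fin 4,
    let v := parity fun j => e (i ^^^ j)
    v = ![1, 0, 0, 0] ∨ v = ![0, 1, 1, 1] ∨ v = ![1, 1, 0, 0] ∨ v = ![1, 0, 1, 0] ∨
      v = ![1, 0, 0, 1] ∨ v = ![0, 0, 0, 0] ∨ v = ![1, 1, 1, 1] := by
  obtain ⟨p, hp⟩ : ∃ p : Fin 4 → Fin 2, ∀ i, e i % 2 = (p i).val :=
    ⟨fun i => ⟨(e i % 2).toNat, by omega⟩, fun i => by grind⟩
  unfold parity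
  simp only [hp]
  clear hp
  revert p
  decide

section Compatible

variable {e g h k : Fin 4 → ℤ}

theorem Compatible.emod_two (hc : Compatible e g h k) (i : Fin 4) : g i % 2 = e i % 2 ∧
    h i % 2 = e i % 2 ∧ k i % 2 = e i % 2 ∧ 4 ∣ e i + g i + h i + k i := by
  have := hc i
  omega

theorem blockDet_emod_of_one_odd (hc : Compatible e g h k) (he : parity e = ![1, 0, 0, 0]) :
    blockDet e g h k % 16 = 1 := by
  obtain ⟨h0, h1, h2, h3⟩ := parity_eq_iff.1 he
  have c0 := hc.emod_two 0
  have c1 := hc.emod_two 1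
  have c2 := hc.emod_two 2
  have c3 := hc.emod_two 3
  have hE := kleinForm_emod_of_one_odd h0 h1 h2 h3
  have hG := gaussForm_emod_of_one_odd (a := g 0) (b := g 1) (c := g 2) (d := g 3)
    (by omega) (by omega) (by omega) (by omega)
  have hH := gaussForm_emod_of_one_odd (a := h 0) (b := h 2) (c := h 1) (d := h 3)
    (by omega) (by omega) (by omega) (by omega)
  have hK := gaussForm_emod_of_one_odd (a := k 0) (b := k 1) (c := -k 3) (d := k 2)
    (by omega) (by omega) (by omega) (by omega)
  rw [blockDet, prod_emod_sixteen rfl rfl (by omega) (by omega) (by omega) (by omega) hE hG hH hK]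
  omega

theorem blockDet_mem_Aset_of_three_odd (hc : Compatible e g h k)
    (he : parity e = ![0, 1, 1, 1]) : blockDet e g h k ∈ Aset := by
  obtain ⟨h0, h1, h2, h3⟩ := parity_eq_iff.1 he
  have c0 := hc.emod_two 0
  have c1 := hc.emod_two 1
  have c2 := hc.emod_two 2
  have c3 := hc.emod_two 3
  have hE := kleinForm_emod_of_three_odd h0 h1 h2 h3
  have hG := gaussForm_emod_of_three_odd (a := g 0) (b := g 1) (c := g 2) (d := g 3)
    (by omega) (by omega) (by omega) (by omega)
  have hH := gaussForm_emod_of_three_odd (a := h 0) (b := h 2) (c := h 1) (d := h 3)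
    (by omega) (by omega) (by omega) (by omega)
  have hK := gaussForm_emod_of_three_odd (a := k 0) (b := k 1) (c := -k 3) (d := k 2)
    (by omega) (by omega) (by omega) (by omega)
  obtain ⟨p, hp, hpG⟩ := exists_mem_Pset_dvd_of_sq_add_sq
    (gaussForm_eq_sq_add_sq (g 0) (g 1) (g 2) (g 3)) (by omega)
  obtain ⟨q, hq, hqH⟩ := exists_mem_Pset_dvd_of_sq_add_sq
    (gaussForm_eq_sq_add_sq (h 0) (h 2) (h 1) (h 3)) (by omega)
  obtain ⟨r, hr, hrK⟩ := exists_mem_Pset_dvd_of_sq_add_sq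
    (gaussForm_eq_sq_add_sq (k 0) (k 1) (-k 3) (k 2)) (by omega)
  refine mem_Aset_iff.2 ⟨?_, p, hp, q, hq, r, hr,
    mul_dvd_mul (mul_dvd_mul (hpG.mul_left _) hqH) hrK⟩
  rw [blockDet, prod_emod_sixteen rfl rfl (by omega) (by omega) (by omega) (by omega) hE hG hH hK]
  omega

theorem blockDet_mem_evenValues_of_zero_one_odd (hc : Compatible e g h k)
    (he : parity e = ![1, 1, 0, 0]) : blockDet e g h k ∈ evenValues := by
  obtain ⟨h0, h1, h2, h3⟩ := parity_eq_iff.1 he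
  have c0 := hc.emod_two 0
  have c1 := hc.emod_two 1
  have c2 := hc.emod_two 2
  have c3 := hc.emod_two 3
  have hE := kleinForm_dvd_of_two_odd h0 h1 h2 h3
  have hG := gaussForm_dvd_of_adjacent_odd (a := g 0) (b := g 1) (c := g 2) (d := g 3)
    (by omega) (by omega) (by omega) (by omega)
  have hH := gaussForm_dvd_of_opposite_odd (a := h 0) (b := h 2) (c := h 1) (d := h 3)
    (by omega) (by omega) (by omega) (by omega)
  have hK := gaussForm_dvd_of_adjacent_odd (a := k 0) (b := k 1) (c := -k 3) (d := k 2)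
    (by omega) (by omega) (by omega) (by omega)
  convert mul_mem_evenValues hE hH hG hK (by omega) (by omega) (by omega) (by omega)
    (by omega) using 1
  rw [blockDet]
  ring

theorem blockDet_mem_evenValues_of_zero_two_odd (hc : Compatible e g h k)
    (he : parity e = ![1, 0, 1, 0]) : blockDet e g h k ∈ evenValues := by
  obtain ⟨h0, h1, h2, h3⟩ := parity_eq_iff.1 he
  rw [← blockDet_swap]
  refine blockDet_mem_evenValues_of_zero_one_odd (fun i => ?_) (parity_eq_iff.2 ⟨h0, h2, h1, h3⟩)
  have := hc (Equiv.swap 1 2 i)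
  simp only [Function.comp_apply]
  omega

theorem blockDet_mem_evenValues_of_zero_three_odd (hc : Compatible e g h k)
    (he : parity e = ![1, 0, 0, 1]) : blockDet e g h k ∈ evenValues := by
  obtain ⟨h0, h1, h2, h3⟩ := parity_eq_iff.1 he
  have c0 := hc.emod_two 0
  have c1 := hc.emod_two 1
  have c2 := hc.emod_two 2
  have c3 := hc.emod_two 3
  have hE := kleinForm_dvd_of_two_odd h0 h3 h1 h2
  have hG := gaussForm_dvd_of_adjacent_odd (a := g 0) (b := g 3) (c := g 2) (d := g 1)
    (by omega) (by omega) (by omega) (by omega)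
  have hH := gaussForm_dvd_of_adjacent_odd (a := h 0) (b := h 3) (c := h 1) (d := h 2)
    (by omega) (by omega) (by omega) (by omega)
  have hK := gaussForm_dvd_of_opposite_odd (a := k 0) (b := k 1) (c := -k 3) (d := k 2)
    (by omega) (by omega) (by omega) (by omega)
  convert mul_mem_evenValues hE hK hG hH (by omega) (by omega) (by omega) (by omega)
    (by omega) using 1
  rw [blockDet, kleinForm_rotate_right, gaussForm_swap_right (g 0), gaussForm_swap_right (h 0)]
  ring

theorem blockDet_mem_evenValues_of_parity_const {r : ℤ} (hc : Compatible e g h k)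
    (he : parity e = ![r, r, r, r]) : blockDet e g h k ∈ evenValues := by
  obtain ⟨h0, h1, h2, h3⟩ := parity_eq_iff.1 he
  obtain ⟨hg0, hh0, hk0, -⟩ := hc.emod_two 0
  obtain ⟨hg1, hh1, hk1, -⟩ := hc.emod_two 1
  obtain ⟨hg2, hh2, hk2, -⟩ := hc.emod_two 2
  obtain ⟨hg3, hh3, hk3, -⟩ := hc.emod_two 3
  have hE := kleinForm_dvd_of_emod_two_eq h0 h1 h2 h3
  have hG := gaussForm_dvd_of_emod_two_eq (hg0.trans h0) (hg1.trans h1) (hg2.trans h2)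
    (hg3.trans h3)
  have hH := gaussForm_dvd_of_emod_two_eq (hh0.trans h0) (hh2.trans h2) (hh1.trans h1)
    (hh3.trans h3)
  have hK := gaussForm_dvd_of_emod_two_eq (hk0.trans h0) (hk1.trans h1)
    ((Int.neg_emod_two _).trans (hk3.trans h3)) (hk2.trans h2)
  have := mul_dvd_mul (mul_dvd_mul (mul_dvd_mul hE hG) hH) hK
  exact .inl (by simpa only [blockDet, ← pow_add] using this)

theorem blockDet_trichotomy (hc : Compatible e g h k) : blockDet e g h k % 16 = 1 ∨
    blockDet e g h k ∈ evenValues ∨ blockDet e g h k ∈ Aset := by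
  obtain ⟨i, hi⟩ := exists_parity_xor_eq e
  have hci : Compatible (fun j => e (i ^^^ j)) (fun j => g (i ^^^ j)) (fun j => h (i ^^^ j))
    (fun j => k (i ^^^ j)) := fun j => hc (i ^^^ j)
  rw [← blockDet_xor e g h k i]
  rcases hi with h | h | h | h | h | h | h
  · exact .inl (blockDet_emod_of_one_odd hci h)
  · exact .inr (.inr (blockDet_mem_Aset_of_three_odd hci h))
  · exact .inr (.inl (blockDet_mem_evenValues_of_zero_one_odd hci h))
  · exact .inr (.inl (blockDet_mem_evenValues_of_zero_two_odd hci h))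
  · exact .inr (.inl (blockDet_mem_evenValues_of_zero_three_odd hci h))
  · exact .inr (.inl (blockDet_mem_evenValues_of_parity_const hci h))
  · exact .inr (.inl (blockDet_mem_evenValues_of_parity_const hci h))

end Compatible

/-! ### Attained values -/

theorem exists_gaussForm_eq {n x y : ℤ} (hn : n = x ^ 2 + y ^ 2) (h5 : n % 8 = 5) :
    ∃ a b c d, gaussForm a b c d = n ∧ a % 2 = 0 ∧ b % 4 = 1 ∧ c % 4 = 1 ∧ d % 4 = 1 := by
  obtain ⟨x, y, rfl, hx, hy⟩ := exists_normalized_sq_add_sq hn h5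
  obtain ⟨t, rfl⟩ : ∃ t, y = 8 * t + 2 := ⟨y / 8, by omega⟩
  rcases hx with hx | hx
  · obtain ⟨s, rfl⟩ : ∃ s, x = 8 * s + 1 := ⟨x / 8, by omega⟩
    exact ⟨4 * s, 4 * t + 1, 4 * s + 1, 4 * t + 1, by unfold gaussForm; ring, by omega⟩
  · obtain ⟨s, rfl⟩ : ∃ s, x = 8 * s + 3 := ⟨x / 8, by omega⟩
    exact ⟨4 * s + 2, 4 * t + 1, 4 * s + 1, 4 * t + 1, by unfold gaussForm; ring, by omega⟩

theorem exists_kleinForm_eq {n : ℤ} (h5 : n % 8 = 5) :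
    ∃ a b c d, kleinForm a b c d = n ∧ a % 2 = 0 ∧ b % 4 = 1 ∧ c % 4 = 1 ∧ d % 4 = 3 := by
  rcases (by omega : n % 16 = 5 ∨ n % 16 = 13) with h | h
  · obtain ⟨m, rfl⟩ : ∃ m, n = 5 - 16 * m := ⟨(5 - n) / 16, by omega⟩
    exact ⟨4 * m - 2, 1 - 4 * m, 1 - 4 * m, 4 * m - 1, by unfold kleinForm; ring, by omega⟩
  · obtain ⟨m, rfl⟩ : ∃ m, n = 16 * m - 3 := ⟨(n + 3) / 16, by omega⟩
    exact ⟨4 * m, 1 - 4 * m, 1 - 4 * m, 4 * m - 1, by unfold kleinForm; ring, by omega⟩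

theorem exists_two_mul_eq_sq_add_sq {n x y : ℤ} (hn : n = x ^ 2 + y ^ 2) (h5 : n % 8 = 5) :
    ∃ u v : ℤ, 2 * n = (8 * u + 1) ^ 2 + (8 * v - 3) ^ 2 := by
  obtain ⟨x, y, rfl, hx, hy⟩ := exists_normalized_sq_add_sq hn h5
  obtain ⟨t, rfl⟩ : ∃ t, y = 8 * t + 2 := ⟨y / 8, by omega⟩
  rcases hx with hx | hx
  · obtain ⟨s, rfl⟩ : ∃ s, x = 8 * s + 1 := ⟨x / 8, by omega⟩
    exact ⟨t - s, -s - t, by ring⟩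
  · obtain ⟨s, rfl⟩ : ∃ s, x = 8 * s + 3 := ⟨x / 8, by omega⟩
    exact ⟨s - t, s + t + 1, by ring⟩

theorem compatible_vec_iff {a₀ a₁ a₂ a₃ b₀ b₁ b₂ b₃ c₀ c₁ c₂ c₃ d₀ d₁ d₂ d₃ : ℤ} :
    Compatible ![a₀, a₁, a₂, a₃] ![b₀, b₁, b₂, b₃] ![c₀, c₁, c₂, c₃] ![d₀, d₁, d₂, d₃] ↔
      (b₀ % 2 = a₀ % 2 ∧ c₀ % 2 = a₀ % 2 ∧ 4 ∣ a₀ + b₀ + c₀ + d₀) ∧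
      (b₁ % 2 = a₁ % 2 ∧ c₁ % 2 = a₁ % 2 ∧ 4 ∣ a₁ + b₁ + c₁ + d₁) ∧
      (b₂ % 2 = a₂ % 2 ∧ c₂ % 2 = a₂ % 2 ∧ 4 ∣ a₂ + b₂ + c₂ + d₂) ∧
      (b₃ % 2 = a₃ % 2 ∧ c₃ % 2 = a₃ % 2 ∧ 4 ∣ a₃ + b₃ + c₃ + d₃) := by
  simp [Compatible, Fin.forall_fin_succ]

theorem sixteen_mul_add_one_mem_S44 (m : ℤ) : 16 * m + 1 ∈ S44 := by
  refine mem_S44_iff.2 ⟨![4 * m + 1, 4 * m, 4 * m, 4 * m], ![1, 0, 0, 0], ![1, 0, 0, 0],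
    ![1, 0, 0, 0], compatible_vec_iff.2 (by omega), ?_⟩
  simp only [blockDet, kleinForm, gaussForm, cons_val]
  ring

theorem two_pow_sixteen_mul_mem_S44 (m : ℤ) : 2 ^ 16 * m ∈ S44 := by
  obtain ⟨n, rfl | rfl⟩ := m.even_or_odd'
  · refine mem_S44_iff.2 ⟨![1 - 4 * n, 1 - 4 * n, -2 - 4 * n, -4 * n], ![1, 1, 0, 0],
      ![1, 1, 2, 0], ![1, 1, 0, 0], compatible_vec_iff.2 (by omega), ?_⟩
    simp only [blockDet, kleinForm, gaussForm, cons_val]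
    ring
  · refine mem_S44_iff.2 ⟨![-1 - 4 * n, -1 - 4 * n, -2 - 4 * n, -4 - 4 * n], ![-1, -1, 0, 0],
      ![-1, -1, -2, 0], ![-1, -1, 0, 0], compatible_vec_iff.2 (by omega), ?_⟩
    simp only [blockDet, kleinForm, gaussForm, cons_val]
    ring

theorem two_pow_fifteen_mul_mem_S44 {p : ℤ} (hp : p ∈ Pset) (m : ℤ) :
    2 ^ 15 * p * (2 * m + 1) ∈ S44 := by
  obtain ⟨x, y, hxy⟩ := exists_sq_add_sq_of_mem_Pset hp
  obtain ⟨u, v, huv⟩ := exists_two_mul_eq_sq_add_sq hxy (emod_eight_of_mem_Pset hp)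
  obtain ⟨n, rfl | rfl⟩ := m.even_or_odd'
  · refine mem_S44_iff.2 ⟨![4 * n + 1, 4 * n + 3, 4 * n, 4 * n],
      ![4 * u + 1, 4 * v - 1, 4 * u, 4 * v - 2], ![1, 1, 0, 2], ![1, 1, 0, 0],
      compatible_vec_iff.2 (by omega), ?_⟩
    simp only [blockDet, kleinForm, gaussForm, cons_val]
    linear_combination 2 ^ 14 * (4 * n + 1) * huv
  · refine mem_S44_iff.2 ⟨![-4 * n - 3, -4 * n - 5, -4 * n - 2, -4 * n - 2],
      ![4 * u + 1, 4 * v - 1, 4 * u, 4 * v - 2], ![1, 1, 2, 0], ![1, 1, 0, 0],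
      compatible_vec_iff.2 (by omega), ?_⟩
    simp only [blockDet, kleinForm, gaussForm, cons_val]
    linear_combination 2 ^ 14 * (4 * n + 3) * huv

theorem exists_gaussForm_eq_of_mem_Pset {p : ℤ} (hp : p ∈ Pset) :
    ∃ a b c d, gaussForm a b c d = p ∧ a % 2 = 0 ∧ b % 4 = 1 ∧ c % 4 = 1 ∧ d % 4 = 1 := by
  obtain ⟨x, y, hxy⟩ := exists_sq_add_sq_of_mem_Pset hp
  exact exists_gaussForm_eq hxy (emod_eight_of_mem_Pset hp)

theorem Aset_subset_S44 : Aset ⊆ S44 := by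
  intro x hx
  obtain ⟨h9, p, hp, q, hq, r, hr, n, rfl⟩ := mem_Aset_iff.1 hx
  obtain ⟨a₀, a₁, a₂, a₃, rfl, ha₀, ha₁, ha₂, ha₃⟩ :=
    exists_kleinForm_eq (emod_eight_of_mul_emod_eight (n := n) hp hq hr (by omega))
  obtain ⟨b₀, b₁, b₂, b₃, rfl, hb₀, hb₁, hb₂, hb₃⟩ := exists_gaussForm_eq_of_mem_Pset hp
  obtain ⟨c₀, c₁, c₂, c₃, rfl, hc₀, hc₁, hc₂, hc₃⟩ := exists_gaussForm_eq_of_mem_Pset hq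
  obtain ⟨d₀, d₁, d₂, d₃, rfl, hd₀, hd₁, hd₂, hd₃⟩ := exists_gaussForm_eq_of_mem_Pset hr
  have hE := kleinForm_emod_of_three_odd (b := a₁) (c := a₂) (d := a₃) ha₀ (by omega) (by omega)
    (by omega)
  have hG := gaussForm_emod_of_three_odd (b := b₁) (c := b₂) (d := b₃) hb₀ (by omega) (by omega)
    (by omega)
  have hH := gaussForm_emod_of_three_odd (b := c₁) (c := c₂) (d := c₃) hc₀ (by omega) (by omega)
    (by omega)
  have hK := gaussForm_emod_of_three_odd (b := d₁) (c := d₂) (d := d₃) hd₀ (by omega) (by omega)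
    (by omega)
  have hprod := mul_comm (gaussForm b₀ b₁ b₂ b₃ * gaussForm c₀ c₁ c₂ c₃ * gaussForm d₀ d₁ d₂ d₃)
    (kleinForm a₀ a₁ a₂ a₃)
  simp only [← mul_assoc] at hprod
  rw [hprod, prod_emod_sixteen rfl rfl ha₀ hb₀ hc₀ hd₀ hE hG hH hK] at h9
  refine mem_S44_iff.2 ⟨![a₀, a₁, a₂, a₃], ![b₀, b₁, b₂, b₃], ![c₀, c₂, c₁, c₃],
    ![d₀, d₁, d₃, -d₂], compatible_vec_iff.2 (by omega), ?_⟩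
  simp only [blockDet, cons_val, neg_neg]
  exact hprod

theorem stmt0 :
    S44 = {x : ℤ | ∃ m : ℤ, x = 16 * m + 1} ∪
          {x : ℤ | ∃ p ∈ Pset, ∃ m : ℤ, x = 2 ^ 15 * p * (2 * m + 1)} ∪
          {x : ℤ | ∃ m : ℤ, x = 2 ^ 16 * m} ∪ Aset := by
  ext x
  constructor
  · intro hx
    obtain ⟨e, g, h, k, hc, rfl⟩ := mem_S44_iff.1 hx
    rcases blockDet_trichotomy hc with h1 | heven | hA
    · exact .inl (.inl (.inl ⟨blockDet e g h k / 16, by omega⟩))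
    · rcases mem_evenValues_iff.1 heven with h15 | h16
      · exact .inl (.inl (.inr h15))
      · exact .inl (.inr h16)
    · exact .inr hA
  · rintro (((⟨m, rfl⟩ | ⟨p, hp, m, rfl⟩) | ⟨m, rfl⟩) | hA)
    · exact sixteen_mul_add_one_mem_S44 m
    · exact two_pow_fifteen_mul_mem_S44 hp m
    · exact two_pow_sixteen_mul_mem_S44 m
    · exact Aset_subset_S44 hA
end

section
/- With the notation below, the five integers D_{4×4}(a), D_4(b_0,b_1,b_2,b_3), D_4(c_0,c_1,c_2,c_3), ββ̄, and γγ̄ are all congruent to one another modulo 2. -/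
open Matrix Complex

def D4 (x0 x1 x2 x3 : ℤ) : ℤ :=
  (Matrix.of ![![x0, x1, x2, x3], ![x3, x0, x1, x2], ![x2, x3, x0, x1], ![x1, x2, x3, x0]]).det

def bI (a : ℕ → ℤ) (i : ℕ) : ℤ := (a i + a (i + 8)) + (a (i + 4) + a (i + 12))

def cI (a : ℕ → ℤ) (i : ℕ) : ℤ := (a i + a (i + 8)) - (a (i + 4) + a (i + 12))

def dd (a : ℕ → ℤ) (i : ℕ) : ℤ := a i - a (i + 8)

noncomputable def alphaD (d : ℕ → ℤ) (i : ℕ) : ℂ := (d i : ℂ) + Complex.I * (d (i + 4) : ℂ)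

noncomputable def betaD (d : ℕ → ℤ) : ℂ :=
  (alphaD d 0 + alphaD d 2) ^ 2 - (alphaD d 1 + alphaD d 3) ^ 2

noncomputable def gammaD (d : ℕ → ℤ) : ℂ :=
  (alphaD d 0 - alphaD d 2) ^ 2 + (alphaD d 1 - alphaD d 3) ^ 2

/-!
Over a ring of characteristic `p`, the `p ^ n`-th power of `∑ v g • g` in the group algebra of an
abelian group killed by `p ^ n` is the scalar `(∑ v g) ^ p ^ n`, because Frobenius is additive.
Circulant matrices are the matrices of multiplication in the group algebra, so their determinants
depend only on `∑ v g`; this makes all three determinants congruent modulo `2` to the sum of the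
sixteen variables. The integers `β β̄` and `γ γ̄` are norms of Gaussian integers. The norm of `z` is
congruent modulo `2` to the image of `z` in `ℤ[i] / (1 + i) ≅ ℤ / 2`, and this ring homomorphism
sends both `β` and `γ` to the class of the same sum.
-/

section GroupMatrix

open AddMonoidAlgebra

theorem leftMulMatrix_sum_single {R G : Type*} [CommRing R] [AddGroup G] [Fintype G]
    [DecidableEq G] (v : G → R) :
    Algebra.leftMulMatrix (AddMonoidAlgebra.basis G R) (∑ g, single g (v g)) =
      Matrix.circulant v := by
  ext g h
  have repr_single (k : G) (r : R) :
      (AddMonoidAlgebra.basis G R).repr (single k r) g = if k = g then r else 0 :=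
    Finsupp.single_apply
  simp [Algebra.leftMulMatrix_eq_repr_mul, repr_single, Finset.sum_mul, Matrix.circulant_apply,
    ← eq_sub_iff_add_eq]

theorem sum_single_pow_char_pow {R G : Type*} [CommSemiring R] [AddCommMonoid G] {p n : ℕ}
    [ExpChar R p] (hG : ∀ g : G, p ^ n • g = 0) (s : Finset G) (v : G → R) :
    (∑ g ∈ s, single g (v g)) ^ p ^ n =
      algebraMap R (AddMonoidAlgebra R G) ((∑ g ∈ s, v g) ^ p ^ n) := by
  have : ExpChar (AddMonoidAlgebra R G) p :=
    expChar_of_injective_ringHom (f := singleZeroRingHom) single_right_injective p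
  simp only [sum_pow_char_pow, single_pow, hG, map_sum, AddMonoidAlgebra.coe_algebraMap,
    Function.comp_apply, Algebra.algebraMap_self, RingHom.id_apply]

variable {G : Type*} [AddCommGroup G] [Fintype G] [DecidableEq G] {p n : ℕ}

theorem det_circulant_eq_sum_pow_card_of_isReduced {R : Type*} [CommRing R] [IsReduced R]
    [ExpChar R p] (hG : ∀ g : G, p ^ n • g = 0) (v : G → R) :
    (Matrix.circulant v).det = (∑ g, v g) ^ Fintype.card G := by
  apply iterateFrobenius_inj R p n
  simp only [iterateFrobenius_def]
  rw [← Matrix.det_pow, ← leftMulMatrix_sum_single, ← map_pow, sum_single_pow_char_pow hG,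
    AlgHom.commutes, Matrix.algebraMap_eq_diagonal]
  simp [pow_right_comm]

theorem det_circulant_eq_sum_pow_card {R : Type*} [CommRing R] [Fact p.Prime] [CharP R p]
    (hG : ∀ g : G, p ^ n • g = 0) (v : G → R) :
    (Matrix.circulant v).det = (∑ g, v g) ^ Fintype.card G := by
  let : Algebra (ZMod p) R := ZMod.algebra R p
  have generic := det_circulant_eq_sum_pow_card_of_isReduced hG
    (MvPolynomial.X : G → MvPolynomial G (ZMod p))
  have specialized := congrArg (MvPolynomial.aeval v) generic
  simpa [AlgHom.map_det, Matrix.map_circulant] using specialized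

theorem det_circulant_modEq_sum [Fact p.Prime] (hG : Fintype.card G = p ^ n) (v : G → ℤ) :
    (Matrix.circulant v).det ≡ ∑ g, v g [ZMOD p] := by
  have hp (g : G) : p ^ n • g = 0 := hG ▸ card_nsmul_eq_zero
  rw [← ZMod.intCast_eq_intCast_iff, Int.cast_det, Matrix.map_circulant,
    det_circulant_eq_sum_pow_card hp, hG, ZMod.pow_card_pow, Int.cast_sum]

end GroupMatrix

theorem D4_eq_det_circulant (x₀ x₁ x₂ x₃ : ℤ) :
    D4 x₀ x₁ x₂ x₃ = (Matrix.circulant ![x₀, x₁, x₂, x₃]).det := by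
  rw [D4, ← Matrix.det_transpose]
  congr 1
  ext i j
  fin_cases i <;> fin_cases j <;> rfl

theorem D4_modEq_sum (x : ℕ → ℤ) :
    D4 (x 0) (x 1) (x 2) (x 3) ≡ ∑ i ∈ Finset.range 4, x i [ZMOD 2] := by
  rw [D4_eq_det_circulant]
  simpa [Fin.sum_univ_four, Finset.sum_range_succ] using
    det_circulant_modEq_sum (p := 2) (n := 2) (by simp) ![x 0, x 1, x 2, x 3]

theorem sum_zmod_prod_eq_sum_range {M : Type*} [AddCommMonoid M] (m n : ℕ) [NeZero m] [NeZero n]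
    (f : ℕ → M) :
    ∑ g : ZMod m × ZMod n, f (g.1.val + m * g.2.val) = ∑ i ∈ Finset.range (n * m), f i := by
  obtain ⟨m, rfl⟩ := Nat.exists_eq_succ_of_ne_zero (NeZero.ne m)
  obtain ⟨n, rfl⟩ := Nat.exists_eq_succ_of_ne_zero (NeZero.ne n)
  rw [Finset.sum_range]
  exact Fintype.sum_equiv ((Equiv.prodComm _ _).trans finProdFinEquiv) _ _ fun _ ↦ rfl

theorem sum_bI (a : ℕ → ℤ) :
    ∑ i ∈ Finset.range 4, bI a i = ∑ i ∈ Finset.range 16, a i := by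
  simp only [bI, Finset.sum_range_succ, Finset.sum_range_zero]
  ring

theorem cI_modEq_bI (a : ℕ → ℤ) (i : ℕ) : cI a i ≡ bI a i [ZMOD 2] := by
  simp only [cI, bI, Int.ModEq]
  lia

theorem D4_bI_modEq_D4_cI (a : ℕ → ℤ) :
    D4 (bI a 0) (bI a 1) (bI a 2) (bI a 3) ≡ D4 (cI a 0) (cI a 1) (cI a 2) (cI a 3) [ZMOD 2] :=
  calc
    D4 (bI a 0) (bI a 1) (bI a 2) (bI a 3)
    _ ≡ ∑ i ∈ Finset.range 4, bI a i [ZMOD 2] := D4_modEq_sum (bI a)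
    _ ≡ ∑ i ∈ Finset.range 4, cI a i [ZMOD 2] := .sum fun i _ ↦ (cI_modEq_bI a i).symm
    _ ≡ D4 (cI a 0) (cI a 1) (cI a 2) (cI a 3) [ZMOD 2] := (D4_modEq_sum (cI a)).symm

theorem sum_dd_modEq (a : ℕ → ℤ) :
    ∑ i ∈ Finset.range 8, dd a i ≡ ∑ i ∈ Finset.range 16, a i [ZMOD 2] := by
  simp only [dd, Finset.sum_range_succ, Finset.sum_range_zero, Int.ModEq]
  lia

/-- The quotient map `ℤ[i] → ℤ[i] / (1 + i)`, with the quotient identified with `ZMod 2`; it is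
used to read off the parity of the norm. -/
def gaussianResidue : GaussianInt →+* ZMod 2 :=
  Zsqrtd.lift ⟨1, rfl⟩

theorem gaussianResidue_apply (z : GaussianInt) : gaussianResidue z = z.re + z.im := by
  simp [gaussianResidue]

theorem intCast_norm_eq_gaussianResidue (z : GaussianInt) :
    (z.norm : ZMod 2) = gaussianResidue z := by
  have mul_self (r : ZMod 2) : r * r = r := by decide +revert
  simp [Zsqrtd.norm_def, gaussianResidue_apply, mul_self]

open scoped ComplexConjugate in
theorem eq_norm_of_intCast_eq_mul_conj {m : ℤ} {z : GaussianInt} (h : (m : ℂ) = z * conj (z : ℂ)) :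
    m = z.norm := by
  rw [Complex.mul_conj, ← GaussianInt.intCast_complex_norm] at h
  exact_mod_cast h

/-- The number `α_i` as a Gaussian integer, so that it can be reduced modulo `1 + i`. -/
def gaussianAlpha (d : ℕ → ℤ) (i : ℕ) : GaussianInt := ⟨d i, d (i + 4)⟩

/-- The number `β` as a Gaussian integer, so that it can be reduced modulo `1 + i`. -/
def gaussianBeta (d : ℕ → ℤ) : GaussianInt :=
  (gaussianAlpha d 0 + gaussianAlpha d 2) ^ 2 - (gaussianAlpha d 1 + gaussianAlpha d 3) ^ 2

/-- The number `γ` as a Gaussian integer, so that it can be reduced modulo `1 + i`. -/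
def gaussianGamma (d : ℕ → ℤ) : GaussianInt :=
  (gaussianAlpha d 0 - gaussianAlpha d 2) ^ 2 + (gaussianAlpha d 1 - gaussianAlpha d 3) ^ 2

section Gaussian

variable (d : ℕ → ℤ)

theorem toComplex_gaussianAlpha (i : ℕ) : (gaussianAlpha d i : ℂ) = alphaD d i := by
  simp [gaussianAlpha, alphaD, GaussianInt.toComplex_def, mul_comm]

theorem toComplex_gaussianBeta : (gaussianBeta d : ℂ) = betaD d := by
  simp [gaussianBeta, betaD, toComplex_gaussianAlpha]

theorem toComplex_gaussianGamma : (gaussianGamma d : ℂ) = gammaD d := by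
  simp [gaussianGamma, gammaD, toComplex_gaussianAlpha]

theorem sum_gaussianResidue_gaussianAlpha :
    ∑ i ∈ Finset.range 4, gaussianResidue (gaussianAlpha d i) =
      ((∑ i ∈ Finset.range 8, d i : ℤ) : ZMod 2) := by
  simp only [gaussianResidue_apply, gaussianAlpha, Finset.sum_range_succ, Finset.sum_range_zero]
  push_cast
  ring

theorem gaussianResidue_gaussianBeta :
    gaussianResidue (gaussianBeta d) = ((∑ i ∈ Finset.range 8, d i : ℤ) : ZMod 2) := by
  rw [← sum_gaussianResidue_gaussianAlpha]
  simp only [gaussianBeta, map_sub, map_add, map_pow, ZMod.pow_card, CharTwo.sub_eq_add,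
    Finset.sum_range_succ, Finset.sum_range_zero]
  ring

theorem gaussianResidue_gaussianGamma :
    gaussianResidue (gaussianGamma d) = gaussianResidue (gaussianBeta d) := by
  simp only [gaussianGamma, gaussianBeta, map_sub, map_add, map_pow, CharTwo.sub_eq_add]

theorem norm_gaussianBeta_modEq_sum :
    (gaussianBeta d).norm ≡ ∑ i ∈ Finset.range 8, d i [ZMOD 2] := by
  refine (ZMod.intCast_eq_intCast_iff _ _ 2).1 ?_
  exact (intCast_norm_eq_gaussianResidue _).trans (gaussianResidue_gaussianBeta d)

theorem norm_gaussianBeta_modEq_norm_gaussianGamma :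
    (gaussianBeta d).norm ≡ (gaussianGamma d).norm [ZMOD 2] := by
  refine (ZMod.intCast_eq_intCast_iff _ _ 2).1 ?_
  simp only [intCast_norm_eq_gaussianResidue, gaussianResidue_gaussianGamma]

end Gaussian

theorem stmt4 (a : ℕ → ℤ) (B G : ℤ)
    (hB : (B : ℂ) = betaD (dd a) * (starRingEnd ℂ) (betaD (dd a)))
    (hG : (G : ℂ) = gammaD (dd a) * (starRingEnd ℂ) (gammaD (dd a))) :
    Matrix.det (Matrix.of fun g h : ZMod 4 × ZMod 4 =>
        a ((g - h).1.val + 4 * (g - h).2.val)) ≡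
      D4 (bI a 0) (bI a 1) (bI a 2) (bI a 3) [ZMOD 2] ∧
    D4 (bI a 0) (bI a 1) (bI a 2) (bI a 3) ≡ D4 (cI a 0) (cI a 1) (cI a 2) (cI a 3) [ZMOD 2] ∧
    D4 (cI a 0) (cI a 1) (cI a 2) (cI a 3) ≡ B [ZMOD 2] ∧
    B ≡ G [ZMOD 2] := by
  have hA := det_circulant_modEq_sum (p := 2) (n := 4) (by simp)
    fun g : ZMod 4 × ZMod 4 ↦ a (g.1.val + 4 * g.2.val)
  rw [sum_zmod_prod_eq_sum_range] at hA
  have hb := D4_modEq_sum (bI a)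
  rw [sum_bI] at hb
  have hbc := D4_bI_modEq_D4_cI a
  rw [← toComplex_gaussianBeta] at hB
  rw [← toComplex_gaussianGamma] at hG
  obtain rfl := eq_norm_of_intCast_eq_mul_conj hB
  obtain rfl := eq_norm_of_intCast_eq_mul_conj hG
  have hβ := (norm_gaussianBeta_modEq_sum (dd a)).trans (sum_dd_modEq a)
  exact ⟨hA.trans hb.symm, hbc, hbc.symm.trans (hb.trans hβ.symm),
    norm_gaussianBeta_modEq_norm_gaussianGamma (dd a)⟩
end

section
/- Every odd integer belonging to S(C_4^2) lies in { 16m+1 : m ∈ ℤ } ∪ A, where A is the set of integers of the form (8j+1)(8k−3)(8l−3)(8m−3)(8n−3) with j,k ∈ ℤ, the numbers 8l−3, 8m−3, 8n−3 primes in P, and j ≢ k+l+m+n (mod 2). -/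
open Matrix Complex

/-!
Over the characters of `(ℤ/4ℤ)²` the determinant factors into sixteen Fourier coefficients. Grouping
the characters by their restriction `(σ, τ)` to `2(ℤ/4ℤ)²` gives four integer factors `N σ τ`, each
the norm of an element of the biquadratic algebra `ℤ[√σ, √τ]` whose coordinates have square sum
`T σ τ`. When everything is odd, `N ≡ 6 T - 5` mod `16` for the trivial pair and `N ≡ 2 T - 1` for
the other three. All the `N` are `1` mod `4`, so mod `16` their product depends only on their sum,
and Parseval's identity `∑ T = 4 ∑ a²` turns that sum into `4 T 1 1 - 3`. If `T 1 1 ≡ 1` mod `4`,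
the determinant is thus `1` mod `16`. Otherwise it is `9` mod `16`, and each of the three nontrivial
norms is a product of two sums of two squares, one of which is `5` mod `8`.
-/

section Circulant

variable {R : Type*} [CommRing R] [IsDomain R]
variable {G : Type*} [AddCommGroup G] [Fintype G] [DecidableEq G]

theorem det_addChar_ne_zero {ψ : G → AddChar G R} (hψ : Function.Injective ψ) :
    (of fun g s => ψ s g).det ≠ 0 := by
  have hind : LinearIndependent R fun s g => ψ s g :=
    (linearIndependent_monoidHom (Multiplicative G) R).comp
      (fun s => AddChar.toMonoidHomEquiv (ψ s)) (AddChar.toMonoidHomEquiv.injective.comp hψ)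
  exact nonsingular_iff_det_ne_zero.mp (Nonsingular.of_linearIndependent_col hind)

theorem det_circulant_eq_prod_addChar_s8 (a : G → R) {ψ : G → AddChar G R}
    (hψ : Function.Injective ψ) :
    (circulant a).det = ∏ s, ∑ g, a g * ψ s g := by
  let F : Matrix G G R := of fun g s => (ψ s)⁻¹ g
  have hF : F.det ≠ 0 := det_addChar_ne_zero (inv_injective.comp hψ)
  have heigen : circulant a * F = F * diagonal fun s => ∑ g, a g * ψ s g := by
    ext g s
    rw [mul_diagonal, mul_apply, Finset.mul_sum, ← (Equiv.subLeft g).sum_comp]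
    refine Finset.sum_congr rfl fun h _ => ?_
    simp only [F, circulant_apply, of_apply, Equiv.subLeft_apply, sub_sub_cancel,
      AddChar.inv_apply, neg_sub, sub_eq_add_neg h g, AddChar.map_add_eq_mul]
    ring
  have hdet := congrArg det heigen
  rw [det_mul, det_mul, det_diagonal, mul_comm] at hdet
  exact mul_left_cancel₀ hF hdet

theorem det_circulant_zmod_prod {n : ℕ} [NeZero n] {ζ : R} (hζ : IsPrimitiveRoot ζ n)
    (a : ZMod n × ZMod n → R) :
    (circulant a).det = ∏ s : ZMod n × ZMod n,
      ∑ g, a g * ((ζ ^ s.1.val) ^ g.1.val * (ζ ^ s.2.val) ^ g.2.val) := by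
  have hroot (s : ZMod n) : (ζ ^ s.val) ^ n = 1 := by rw [pow_right_comm, hζ.pow_eq_one, one_pow]
  let ψ (s : ZMod n × ZMod n) : AddChar (ZMod n × ZMod n) R :=
    (AddChar.zmodChar n (hroot s.1)).compAddMonoidHom (AddMonoidHom.fst _ _) *
      (AddChar.zmodChar n (hroot s.2)).compAddMonoidHom (AddMonoidHom.snd _ _)
  have hψ_apply (s g : ZMod n × ZMod n) :
      ψ s g = (ζ ^ s.1.val) ^ g.1.val * (ζ ^ s.2.val) ^ g.2.val := rfl
  have hval {s t : ZMod n} (h : (ζ ^ s.val) ^ (1 : ZMod n).val = (ζ ^ t.val) ^ (1 : ZMod n).val) :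
      s = t := by
    rw [← AddChar.zmodChar_apply (hroot s), ← AddChar.zmodChar_apply (hroot t), ← Nat.cast_one,
      AddChar.zmodChar_apply', AddChar.zmodChar_apply', pow_one, pow_one] at h
    exact ZMod.val_injective n (hζ.pow_inj s.val_lt t.val_lt h)
  have hψ : Function.Injective ψ := by
    intro s t hst
    have h1 := DFunLike.congr_fun hst (1, 0)
    have h2 := DFunLike.congr_fun hst (0, 1)
    simp only [hψ_apply, ZMod.val_zero, pow_zero, mul_one, one_mul] at h1 h2
    exact Prod.ext (hval h1) (hval h2)
  exact det_circulant_eq_prod_addChar_s8 a hψ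

end Circulant

section Congruences

theorem mul_modEq_add_sub_one {n a b : ℤ} (ha : a ≡ 1 [ZMOD n]) (hb : b ≡ 1 [ZMOD n]) :
    a * b ≡ a + b - 1 [ZMOD n ^ 2] := by
  have h : n ^ 2 ∣ (a - 1) * (b - 1) := by
    rw [sq]
    exact mul_dvd_mul ha.symm.dvd hb.symm.dvd
  refine (Int.modEq_iff_dvd.mpr ?_).symm
  convert h using 1
  ring

theorem mul_mul_mul_modEq_add_sub_three {n a b c d : ℤ} (ha : a ≡ 1 [ZMOD n])
    (hb : b ≡ 1 [ZMOD n]) (hc : c ≡ 1 [ZMOD n]) (hd : d ≡ 1 [ZMOD n]) :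
    a * b * c * d ≡ a + b + c + d - 3 [ZMOD n ^ 2] := by
  have hab : a * b ≡ 1 [ZMOD n] := ha.mul hb
  have habc : a * b * c ≡ 1 [ZMOD n] := hab.mul hc
  have h2 := mul_modEq_add_sub_one ha hb
  have h3 := mul_modEq_add_sub_one hab hc
  calc a * b * c * d
      ≡ a * b * c + d - 1 [ZMOD n ^ 2] := mul_modEq_add_sub_one habc hd
    _ ≡ (a * b + c - 1) + d - 1 [ZMOD n ^ 2] := (h3.add_right d).sub_right 1
    _ ≡ (a + b - 1 + c - 1) + d - 1 [ZMOD n ^ 2] :=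
      (((h2.add_right c).sub_right 1).add_right d).sub_right 1
    _ = a + b + c + d - 3 := by ring

theorem pow_two_pow_modEq_pow_two_pow {x y : ℤ} (h : x ≡ y [ZMOD 2]) (k : ℕ) :
    x ^ 2 ^ k ≡ y ^ 2 ^ k [ZMOD 2 ^ (k + 1)] :=
  (Int.modEq_iff_dvd.mpr (dvd_sub_pow_of_dvd_sub (p := 2) h.symm.dvd k)).symm

theorem pow_two_pow_modEq_emod_two (x : ℤ) (k : ℕ) : x ^ 2 ^ k ≡ x % 2 [ZMOD 2 ^ (k + 1)] := by
  have hpow : (x % 2) ^ 2 ^ k = x % 2 := by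
    rcases Int.emod_two_eq_zero_or_one x with h | h <;> simp [h]
  exact hpow ▸ pow_two_pow_modEq_pow_two_pow (Int.mod_modEq x 2).symm k

theorem sq_modEq_emod_two (x : ℤ) : x ^ 2 ≡ x % 2 [ZMOD 4] :=
  pow_two_pow_modEq_emod_two x 1

theorem sq_modEq_self_two (x : ℤ) : x ^ 2 ≡ x [ZMOD 2] :=
  ((sq_modEq_emod_two x).of_dvd (by norm_num)).trans (Int.mod_modEq x 2)

theorem odd_sum_sq {ι : Type*} {s : Finset ι} {f : ι → ℤ} (h : Odd (∑ i ∈ s, f i)) :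
    Odd (∑ i ∈ s, f i ^ 2) := by
  have hmod : ∑ i ∈ s, f i ^ 2 ≡ ∑ i ∈ s, f i [ZMOD 2] :=
    Int.ModEq.sum fun i _ => sq_modEq_self_two (f i)
  rw [Int.odd_iff] at h ⊢
  exact hmod.eq.trans h

theorem sq_add_sq_modEq_one {u v : ℤ} (h : Odd (u + v)) : u ^ 2 + v ^ 2 ≡ 1 [ZMOD 4] := by
  have huv : u % 2 + v % 2 = 1 := by
    rw [Int.odd_iff] at h
    omega
  exact huv ▸ (sq_modEq_emod_two u).add (sq_modEq_emod_two v)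

theorem exists_prime_dvd_modEq_five {b : ℕ} (hsq : IsSquare (-1 : ZMod b)) (hb : b ≡ 5 [MOD 8]) :
    ∃ p, p.Prime ∧ p ∣ b ∧ p ≡ 5 [MOD 8] := by
  have hb8 : b % 8 = 5 := hb
  obtain ⟨p, hp, hp1⟩ : ∃ p ∈ b.primeFactorsList, ¬ p ≡ 1 [MOD 8] := by
    by_contra! hone
    have h1 : b ≡ 1 [MOD 8] := by
      rw [← Nat.prod_primeFactorsList (show b ≠ 0 by omega)]
      exact Nat.ModEq.listProd_one hone
    have : b % 8 = 1 := h1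
    omega
  have hpb := Nat.dvd_of_mem_primeFactorsList hp
  have hp4 : p % 4 ≠ 3 :=
    Nat.mod_four_ne_three_of_mem_primeFactors_of_isSquare_neg_one
      (Nat.mem_primeFactors_iff_mem_primeFactorsList.mpr hp) hsq
  have hp2 : Odd p := (Nat.odd_iff.mpr (by omega : b % 2 = 1)).of_dvd_nat hpb
  refine ⟨p, Nat.prime_of_mem_primeFactorsList hp, hpb, ?_⟩
  rw [Nat.odd_iff] at hp2
  unfold Nat.ModEq at hp1 ⊢
  omega

theorem exists_mem_Pset_dvd_sq_add_sq {u v : ℤ} (h : u ^ 2 + v ^ 2 ≡ 5 [ZMOD 8]) :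
    ∃ p ∈ Pset, p ∣ u ^ 2 + v ^ 2 := by
  obtain ⟨a, b, hab, hsq⟩ := Nat.eq_sq_add_sq_iff_eq_sq_mul.mp ⟨u.natAbs, v.natAbs, rfl⟩
  have hcast : u ^ 2 + v ^ 2 = (a : ℤ) ^ 2 * b := by
    rw [← Int.natAbs_sq u, ← Int.natAbs_sq v]
    exact_mod_cast hab
  have hmod : a ^ 2 * b ≡ 5 [MOD 8] := by
    rw [← Int.natCast_modEq_iff]
    push_cast
    rwa [← hcast]
  have ha : Odd a := by
    have hodd : Odd (a ^ 2 * b) :=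
      Nat.odd_iff.mpr (hmod.of_dvd (by norm_num : 2 ∣ 8))
    exact (Nat.odd_pow_iff two_ne_zero).mp (Nat.odd_mul.mp hodd).1
  have ha8 : a ^ 2 ≡ 1 [MOD 8] := by
    rw [← Int.natCast_modEq_iff]
    push_cast
    exact (Int.modEq_iff_dvd.mpr
      (Int.eight_dvd_sq_sub_one_of_odd (Int.odd_coe_nat a |>.mpr ha))).symm
  have hb : b ≡ 5 [MOD 8] := by
    simpa only [one_mul] using (ha8.mul_right b).symm.trans hmod
  obtain ⟨p, hp, hpb, hp8⟩ := exists_prime_dvd_modEq_five hsq hb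
  refine ⟨p, ⟨Nat.prime_iff_prime_int.mp hp, by exact_mod_cast hp.pos, ?_⟩, ?_⟩
  · exact (Int.natCast_modEq_iff.mpr hp8).trans rfl
  · rw [hcast]
    exact (Int.natCast_dvd_natCast.mpr hpb).mul_left _

theorem mem_Aset_of_mul_dvd {x p q r : ℤ} (hp : p ∈ Pset) (hq : q ∈ Pset) (hr : r ∈ Pset)
    (hdvd : p * q * r ∣ x) (hx : x ≡ 9 [ZMOD 16]) : x ∈ Aset := by
  have exists_eq {y : ℤ} (hy : y ≡ -3 [ZMOD 8]) : ∃ k, y = 8 * k - 3 := by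
    obtain ⟨k, hk⟩ := hy.symm.dvd
    exact ⟨k, by linarith⟩
  have modEq_one (k : ℤ) : 8 * k - 3 ≡ 1 [ZMOD 4] := by
    unfold Int.ModEq
    omega
  obtain ⟨c, rfl⟩ := hdvd
  have hc : c ≡ -3 [ZMOD 8] := by
    have h := (((hp.2.2.mul hq.2.2).mul hr.2.2).mul_right c).symm.trans
      (hx.of_dvd (by norm_num : (8 : ℤ) ∣ 16))
    unfold Int.ModEq at h ⊢
    omega
  obtain ⟨k, rfl⟩ := exists_eq hc
  obtain ⟨l, rfl⟩ := exists_eq hp.2.2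
  obtain ⟨m, rfl⟩ := exists_eq hq.2.2
  obtain ⟨n, rfl⟩ := exists_eq hr.2.2
  refine ⟨0, k, l, m, n, hp, hq, hr, fun hpar => ?_, by ring⟩
  have hsum := (mul_mul_mul_modEq_add_sub_three (modEq_one l) (modEq_one m) (modEq_one n)
    (modEq_one k)).symm.trans hx
  unfold Int.ModEq at hsum hpar
  omega

end Congruences

section BiquadraticNorm

/-- The norm of `x + y√τ + z√σ + w√(στ)` from the biquadratic algebra `ℤ[√σ, √τ]`, i.e. the product
of its four conjugates. -/
def biquadNorm (σ τ x y z w : ℤ) : ℤ :=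
  (x ^ 2 + τ * y ^ 2 - σ * z ^ 2 - σ * τ * w ^ 2) ^ 2 - 4 * τ * (x * y - σ * z * w) ^ 2

theorem biquadNorm_eq_prod_conjugates {R : Type*} [CommRing R] {σ τ : ℤ} {α β : R}
    (hα : α ^ 2 = σ) (hβ : β ^ 2 = τ) (x y z w : ℤ) :
    (biquadNorm σ τ x y z w : R) =
      (x + y * β + z * α + w * (α * β)) * (x - y * β + z * α - w * (α * β)) *
        ((x + y * β - z * α - w * (α * β)) * (x - y * β - z * α + w * (α * β))) := by
  simp only [biquadNorm]
  push_cast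
  rw [← hα, ← hβ]
  ring

theorem dvd_biquadNorm_one_one (x y z w : ℤ) : x + y + z + w ∣ biquadNorm 1 1 x y z w :=
  ⟨(x - y + z - w) * ((x + y - z - w) * (x - y - z + w)), by unfold biquadNorm; ring⟩

theorem biquadNorm_one_one_modEq {x y z w : ℤ} (h : Odd (x + y + z + w)) :
    biquadNorm 1 1 x y z w ≡ 6 * (x ^ 2 + y ^ 2 + z ^ 2 + w ^ 2) - 5 [ZMOD 16] := by
  have hpow (k : ℕ) := (((pow_two_pow_modEq_emod_two x k).add (pow_two_pow_modEq_emod_two y k)).add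
    (pow_two_pow_modEq_emod_two z k)).add (pow_two_pow_modEq_emod_two w k)
  obtain ⟨t, ht⟩ := (show _ ≡ _ [ZMOD 4] from hpow 1).symm.dvd
  obtain ⟨s, hs⟩ := (show _ ≡ _ [ZMOD 8] from hpow 2).symm.dvd
  have hcount : x % 2 + y % 2 + z % 2 + w % 2 = 1 ∨ x % 2 + y % 2 + z % 2 + w % 2 = 3 := by
    rw [Int.odd_iff] at h
    omega
  obtain ⟨e, he⟩ : Even (x * y * z * w) := by
    by_contra hodd
    simp only [Int.not_even_iff_odd, Int.odd_mul] at hodd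
    obtain ⟨⟨⟨hx, hy⟩, hz⟩, hw⟩ := hodd
    rw [Int.odd_iff] at hx hy hz hw
    omega
  have hN : biquadNorm 1 1 x y z w = 2 * (x ^ 4 + y ^ 4 + z ^ 4 + w ^ 4)
      - (x ^ 2 + y ^ 2 + z ^ 2 + w ^ 2) ^ 2 + 8 * (x * y * z * w) := by
    unfold biquadNorm
    ring
  rw [hN]
  norm_num only at ht hs
  generalize x ^ 2 + y ^ 2 + z ^ 2 + w ^ 2 = T at *
  refine Int.modEq_iff_dvd.mpr ?_
  rcases hcount with hr | hr <;> rw [hr] at ht hs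
  · exact ⟨t ^ 2 + 2 * t - s - e, by
      linear_combination (T + 4 * t + 7) * ht - 2 * hs - 8 * he⟩
  · exact ⟨t ^ 2 + 3 * t + 1 - s - e, by
      linear_combination (T + 4 * t + 9) * ht - 2 * hs - 8 * he⟩

theorem biquadNorm_eq_mul_sq_add_sq {σ τ : ℤˣ} (hστ : ¬(σ = 1 ∧ τ = 1)) {x y z w : ℤ}
    (h : Odd (x + y + z + w)) :
    ∃ u v u' v' : ℤ, Odd (u + v) ∧ Odd (u' + v') ∧
      biquadNorm σ τ x y z w = (u ^ 2 + v ^ 2) * (u' ^ 2 + v' ^ 2) ∧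
      u ^ 2 + v ^ 2 + (u' ^ 2 + v' ^ 2) = 2 * (x ^ 2 + y ^ 2 + z ^ 2 + w ^ 2) := by
  rw [Int.odd_iff] at h
  simp only [Int.odd_iff]
  rcases Int.units_eq_one_or σ with rfl | rfl <;> rcases Int.units_eq_one_or τ with rfl | rfl
  · exact absurd ⟨rfl, rfl⟩ hστ
  · refine ⟨x + z, y + w, x - z, y - w, by omega, by omega, ?_, by ring⟩
    simp only [biquadNorm, Units.val_neg, Units.val_one]
    ring
  · refine ⟨x + y, z + w, x - y, z - w, by omega, by omega, ?_, by ring⟩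
    simp only [biquadNorm, Units.val_neg, Units.val_one]
    ring
  · refine ⟨x - w, y + z, x + w, y - z, by omega, by omega, ?_, by ring⟩
    simp only [biquadNorm, Units.val_neg, Units.val_one]
    ring

theorem biquadNorm_modEq {σ τ : ℤˣ} (hστ : ¬(σ = 1 ∧ τ = 1)) {x y z w : ℤ}
    (h : Odd (x + y + z + w)) :
    biquadNorm σ τ x y z w ≡ 2 * (x ^ 2 + y ^ 2 + z ^ 2 + w ^ 2) - 1 [ZMOD 16] := by
  obtain ⟨u, v, u', v', huv, huv', hN, hT⟩ := biquadNorm_eq_mul_sq_add_sq hστ h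
  rw [hN, ← hT]
  exact mul_modEq_add_sub_one (sq_add_sq_modEq_one huv) (sq_add_sq_modEq_one huv')

theorem exists_mem_Pset_dvd_biquadNorm {σ τ : ℤˣ} (hστ : ¬(σ = 1 ∧ τ = 1)) {x y z w : ℤ}
    (h : Odd (x + y + z + w)) (hT : x ^ 2 + y ^ 2 + z ^ 2 + w ^ 2 ≡ 3 [ZMOD 4]) :
    ∃ p ∈ Pset, p ∣ biquadNorm σ τ x y z w := by
  obtain ⟨u, v, u', v', huv, huv', hN, hsum⟩ := biquadNorm_eq_mul_sq_add_sq hστ h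
  have h1 := sq_add_sq_modEq_one huv
  have h2 := sq_add_sq_modEq_one huv'
  have hfive : u ^ 2 + v ^ 2 ≡ 5 [ZMOD 8] ∨ u' ^ 2 + v' ^ 2 ≡ 5 [ZMOD 8] := by
    unfold Int.ModEq at *
    omega
  rw [hN]
  rcases hfive with h5 | h5
  · obtain ⟨p, hp, hdvd⟩ := exists_mem_Pset_dvd_sq_add_sq h5
    exact ⟨p, hp, hdvd.mul_right _⟩
  · obtain ⟨p, hp, hdvd⟩ := exists_mem_Pset_dvd_sq_add_sq h5
    exact ⟨p, hp, hdvd.mul_left _⟩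

end BiquadraticNorm

section GroupDeterminant

variable (a : ZMod 4 × ZMod 4 → ℤ)

/-- The Fourier coefficient of `a` at the character of `(ℤ/4ℤ)²` sending `(1, 0)` to `α` and
`(0, 1)` to `β`, where `α` and `β` are fourth roots of unity. -/
def fourierCoeff44 {R : Type*} [CommRing R] (α β : R) : R :=
  ∑ g, a g * (α ^ g.1.val * β ^ g.2.val)

/-- The sum of `a` over the coset of `(i, j)` modulo `2(ℤ/4ℤ)²`, twisted by the character of
`2(ℤ/4ℤ)²` sending `(2, 0)` to `σ` and `(0, 2)` to `τ`. -/
def twistedSum (σ τ : ℤˣ) (i j : ZMod 4) : ℤ :=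
  a (i, j) + σ * a (i + 2, j) + τ * a (i, j + 2) + σ * τ * a (i + 2, j + 2)

/-- The product of the Fourier coefficients of `a` at the four characters of `(ℤ/4ℤ)²` that send
`(2, 0)` to `σ` and `(0, 2)` to `τ`. -/
def cosetNorm (σ τ : ℤˣ) : ℤ :=
  biquadNorm σ τ (twistedSum a σ τ 0 0) (twistedSum a σ τ 0 1) (twistedSum a σ τ 1 0)
    (twistedSum a σ τ 1 1)

/-- The sum of the squares of the twisted sums of `a` over the four cosets of `2(ℤ/4ℤ)²`, which is
the mean square modulus of the Fourier coefficients multiplied in `cosetNorm`. -/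
def cosetEnergy (σ τ : ℤˣ) : ℤ :=
  twistedSum a σ τ 0 0 ^ 2 + twistedSum a σ τ 0 1 ^ 2 + twistedSum a σ τ 1 0 ^ 2
    + twistedSum a σ τ 1 1 ^ 2

theorem sum_zmod_four_prod {M : Type*} [AddCommMonoid M] (f : ZMod 4 × ZMod 4 → M) :
    ∑ g, f g = (f (0, 0) + f (0, 1) + f (0, 2) + f (0, 3))
      + (f (1, 0) + f (1, 1) + f (1, 2) + f (1, 3))
      + (f (2, 0) + f (2, 1) + f (2, 2) + f (2, 3))
      + (f (3, 0) + f (3, 1) + f (3, 2) + f (3, 3)) := by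
  have hsum (f : ZMod 4 → M) : ∑ i, f i = f 0 + f 1 + f 2 + f 3 := Fin.sum_univ_four f
  simp only [Fintype.sum_prod_type, hsum]

theorem fourierCoeff44_eq_twistedSum {R : Type*} [CommRing R] {σ τ : ℤˣ} {α β : R}
    (hα : α ^ 2 = (σ : ℤ)) (hβ : β ^ 2 = (τ : ℤ)) :
    fourierCoeff44 a α β = twistedSum a σ τ 0 0 + twistedSum a σ τ 0 1 * β
      + twistedSum a σ τ 1 0 * α + twistedSum a σ τ 1 1 * (α * β) := by
  have hval : (1 : ZMod 4).val = 1 ∧ (2 : ZMod 4).val = 2 ∧ (3 : ZMod 4).val = 3 := ⟨rfl, rfl, rfl⟩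
  simp only [fourierCoeff44, sum_zmod_four_prod, twistedSum, ZMod.val_zero, hval, zero_add,
    show (1 + 2 : ZMod 4) = 3 from rfl]
  push_cast
  rw [← hα, ← hβ]
  ring

theorem cosetNorm_eq_prod_fourierCoeff44 {R : Type*} [CommRing R] {σ τ : ℤˣ} {α β : R}
    (hα : α ^ 2 = (σ : ℤ)) (hβ : β ^ 2 = (τ : ℤ)) :
    (cosetNorm a σ τ : R) = fourierCoeff44 a α β * fourierCoeff44 a α (-β) *
      (fourierCoeff44 a (-α) β * fourierCoeff44 a (-α) (-β)) := by
  have hα' : (-α) ^ 2 = (σ : ℤ) := by rw [neg_sq, hα]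
  have hβ' : (-β) ^ 2 = (τ : ℤ) := by rw [neg_sq, hβ]
  rw [cosetNorm, biquadNorm_eq_prod_conjugates hα hβ, fourierCoeff44_eq_twistedSum a hα hβ,
    fourierCoeff44_eq_twistedSum a hα hβ', fourierCoeff44_eq_twistedSum a hα' hβ,
    fourierCoeff44_eq_twistedSum a hα' hβ']
  ring

theorem groupDet4x4_eq_prod_fourierCoeff44 :
    (groupDet4x4 a : ℂ) =
      ∏ s : ZMod 4 × ZMod 4, fourierCoeff44 a (I ^ s.1.val) (I ^ s.2.val) := by
  simp only [fourierCoeff44]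
  rw [← det_circulant_zmod_prod isPrimitiveRoot_I, groupDet4x4, Int.cast_det]
  rfl

theorem groupDet4x4_eq_prod_cosetNorm :
    groupDet4x4 a =
      cosetNorm a 1 1 * cosetNorm a 1 (-1) * cosetNorm a (-1) 1 * cosetNorm a (-1) (-1) := by
  have hone : (1 : ℂ) ^ 2 = ((1 : ℤˣ) : ℤ) := by simp
  have hI : I ^ 2 = ((-1 : ℤˣ) : ℤ) := by simp
  have hval : (1 : ZMod 4).val = 1 ∧ (2 : ZMod 4).val = 2 ∧ (3 : ZMod 4).val = 3 := ⟨rfl, rfl, rfl⟩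
  have hprod (f : ZMod 4 → ℂ) : ∏ i, f i = f 0 * f 1 * f 2 * f 3 := Fin.prod_univ_four f
  rw [← Int.cast_inj (α := ℂ), groupDet4x4_eq_prod_fourierCoeff44, Fintype.prod_prod_type]
  push_cast
  rw [cosetNorm_eq_prod_fourierCoeff44 a hone hone, cosetNorm_eq_prod_fourierCoeff44 a hone hI,
    cosetNorm_eq_prod_fourierCoeff44 a hI hone, cosetNorm_eq_prod_fourierCoeff44 a hI hI]
  simp only [hprod, ZMod.val_zero, hval, pow_zero, pow_one, I_sq, I_pow_three]
  ring

theorem twistedSum_modEq_two (σ τ : ℤˣ) (i j : ZMod 4) :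
    twistedSum a σ τ i j ≡ twistedSum a 1 1 i j [ZMOD 2] := by
  unfold Int.ModEq
  rcases Int.units_eq_one_or σ with rfl | rfl <;> rcases Int.units_eq_one_or τ with rfl | rfl <;>
    simp only [twistedSum, Units.val_neg, Units.val_one] <;> omega

theorem sum_eq_sum_twistedSum_one_one :
    ∑ g, a g = twistedSum a 1 1 0 0 + twistedSum a 1 1 0 1 + twistedSum a 1 1 1 0
      + twistedSum a 1 1 1 1 := by
  simp only [sum_zmod_four_prod, twistedSum, zero_add, show (1 + 2 : ZMod 4) = 3 from rfl,
    Units.val_one]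
  ring

theorem sum_cosetEnergy :
    cosetEnergy a 1 1 + cosetEnergy a 1 (-1) + cosetEnergy a (-1) 1 + cosetEnergy a (-1) (-1)
      = 4 * ∑ g, a g ^ 2 := by
  simp only [sum_zmod_four_prod, cosetEnergy, twistedSum, zero_add,
    show (1 + 2 : ZMod 4) = 3 from rfl, Units.val_neg, Units.val_one]
  ring

theorem cosetEnergy_modEq_four (σ τ : ℤˣ) :
    cosetEnergy a σ τ ≡ cosetEnergy a 1 1 [ZMOD 4] :=
  have hsq (i j : ZMod 4) : twistedSum a σ τ i j ^ 2 ≡ twistedSum a 1 1 i j ^ 2 [ZMOD 4] :=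
    pow_two_pow_modEq_pow_two_pow (twistedSum_modEq_two a σ τ i j) 1
  (((hsq 0 0).add (hsq 0 1)).add (hsq 1 0)).add (hsq 1 1)

variable {a}

theorem odd_sum_of_odd_groupDet4x4 (h : Odd (groupDet4x4 a)) : Odd (∑ g, a g) := by
  rw [groupDet4x4_eq_prod_cosetNorm] at h
  simp only [Int.odd_mul] at h
  rw [sum_eq_sum_twistedSum_one_one]
  obtain ⟨c, hc⟩ : _ ∣ cosetNorm a 1 1 := dvd_biquadNorm_one_one _ _ _ _
  rw [hc, Int.odd_mul] at h
  exact h.1.1.1.1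

theorem odd_sum_twistedSum (h : Odd (∑ g, a g)) (σ τ : ℤˣ) :
    Odd (twistedSum a σ τ 0 0 + twistedSum a σ τ 0 1 + twistedSum a σ τ 1 0
      + twistedSum a σ τ 1 1) := by
  have hpar (i j : ZMod 4) := twistedSum_modEq_two a σ τ i j
  rw [sum_eq_sum_twistedSum_one_one, Int.odd_iff] at h
  rw [Int.odd_iff]
  exact ((((hpar 0 0).add (hpar 0 1)).add (hpar 1 0)).add (hpar 1 1)).eq.trans h

theorem odd_cosetEnergy (h : Odd (∑ g, a g)) (σ τ : ℤˣ) : Odd (cosetEnergy a σ τ) := by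
  have hsq (i j : ZMod 4) := sq_modEq_self_two (twistedSum a σ τ i j)
  have hodd := odd_sum_twistedSum h σ τ
  rw [Int.odd_iff] at hodd ⊢
  exact ((((hsq 0 0).add (hsq 0 1)).add (hsq 1 0)).add (hsq 1 1)).eq.trans hodd

theorem groupDet4x4_modEq_sixteen (h : Odd (∑ g, a g)) :
    groupDet4x4 a ≡ 4 * cosetEnergy a 1 1 - 3 [ZMOD 16] := by
  have hN₁ : cosetNorm a 1 1 ≡ 6 * cosetEnergy a 1 1 - 5 [ZMOD 16] :=
    biquadNorm_one_one_modEq (odd_sum_twistedSum h 1 1)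
  have hN {σ τ : ℤˣ} (hστ : ¬(σ = 1 ∧ τ = 1)) :
      cosetNorm a σ τ ≡ 2 * cosetEnergy a σ τ - 1 [ZMOD 16] :=
    biquadNorm_modEq hστ (odd_sum_twistedSum h σ τ)
  have hN₂ := hN (σ := 1) (τ := -1) (by decide)
  have hN₃ := hN (σ := -1) (τ := 1) (by decide)
  have hN₄ := hN (σ := -1) (τ := -1) (by decide)
  have hT₁ := odd_cosetEnergy h 1 1
  have hT₂ := odd_cosetEnergy h 1 (-1)
  have hT₃ := odd_cosetEnergy h (-1) 1
  have hT₄ := odd_cosetEnergy h (-1) (-1)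
  have hparseval := sum_cosetEnergy a
  have hS := odd_sum_sq h
  rw [Int.odd_iff] at hT₁ hT₂ hT₃ hT₄ hS
  have hprod : groupDet4x4 a ≡ cosetNorm a 1 1 + cosetNorm a 1 (-1) + cosetNorm a (-1) 1
      + cosetNorm a (-1) (-1) - 3 [ZMOD 4 ^ 2] := by
    rw [groupDet4x4_eq_prod_cosetNorm]
    apply mul_mul_mul_modEq_add_sub_three <;> unfold Int.ModEq at * <;> omega
  unfold Int.ModEq at *
  omega

theorem exists_mem_Pset_mul_dvd_groupDet4x4 (h : Odd (∑ g, a g))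
    (hT : cosetEnergy a 1 1 ≡ 3 [ZMOD 4]) :
    ∃ p ∈ Pset, ∃ q ∈ Pset, ∃ r ∈ Pset, p * q * r ∣ groupDet4x4 a := by
  have hprime {σ τ : ℤˣ} (hστ : ¬(σ = 1 ∧ τ = 1)) : ∃ p ∈ Pset, p ∣ cosetNorm a σ τ :=
    exists_mem_Pset_dvd_biquadNorm hστ (odd_sum_twistedSum h σ τ)
      ((cosetEnergy_modEq_four a σ τ).trans hT)
  obtain ⟨p, hp, hpdvd⟩ := hprime (σ := 1) (τ := -1) (by decide)
  obtain ⟨q, hq, hqdvd⟩ := hprime (σ := -1) (τ := 1) (by decide)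
  obtain ⟨r, hr, hrdvd⟩ := hprime (σ := -1) (τ := -1) (by decide)
  refine ⟨p, hp, q, hq, r, hr, ?_⟩
  rw [groupDet4x4_eq_prod_cosetNorm]
  exact mul_dvd_mul (mul_dvd_mul (hpdvd.mul_left _) hqdvd) hrdvd

end GroupDeterminant

theorem stmt8 (x : ℤ) (hx : x ∈ S44) (hodd : Odd x) :
    x ∈ {y : ℤ | ∃ m : ℤ, y = 16 * m + 1} ∪ Aset := by
  obtain ⟨a, rfl⟩ := hx
  have hsum := odd_sum_of_odd_groupDet4x4 hodd
  have hdet := groupDet4x4_modEq_sixteen hsum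
  have hT : cosetEnergy a 1 1 ≡ 1 [ZMOD 4] ∨ cosetEnergy a 1 1 ≡ 3 [ZMOD 4] := by
    have hmod2 := Int.odd_iff.mp (odd_cosetEnergy hsum 1 1)
    unfold Int.ModEq
    omega
  rcases hT with hT | hT
  · left
    refine ⟨groupDet4x4 a / 16, ?_⟩
    unfold Int.ModEq at hdet hT
    omega
  · right
    obtain ⟨p, hp, q, hq, r, hr, hdvd⟩ := exists_mem_Pset_mul_dvd_groupDet4x4 hsum hT
    refine mem_Aset_of_mul_dvd hp hq hr hdvd ?_
    unfold Int.ModEq at hdet hT ⊢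
    omega
end

section
/- Every even integer belonging to S(C_4^2) is divisible by 2^15; moreover, every element of S(C_4^2) of the form 2^15 times an odd integer can be written as 2^15 · p · (2m+1) for some prime p ∈ P and some integer m. -/
open Matrix Complex

/-!
The group determinant is the product of the values of the Fourier transform of `a` at the sixteen
characters, which lie in `ℤ[i]`. At the square of a character the value is an integer, and the
values at a character and its inverse are conjugate, so the determinant is a product of four
integers and six norms. All values are congruent modulo `1 + i`; hence if the determinant is even,
the four integers are `2 r` and the norms are even. Congruences modulo `2 (1 + i)` show that the
sum of the four `r` is even.

If all the `r` have the same parity, then every norm is divisible by `4`, and `2 ^ 16` divides the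
determinant. Otherwise, up to an automorphism of the group, two of the norms are `4 N` with values
`N` of opposite parity and four are `2 N`, which accounts for a factor `2 ^ 15`. If there is no
further factor `2`, then the four last `N` are odd, hence `1` modulo `4`, and Parseval's identity
twisted by an element of order two determines their sum modulo `8`: one of them is `5` modulo `8`.
Being a sum of two squares, it has a prime factor that is `5` modulo `8`.
-/

namespace IntegerGroupDet

open Finset
open Zsqrtd (sqrtd)

section Congruences

variable {p q s t : ℤ}

theorem two_dvd_mul_of_not_even_add (h : ¬Even (p + q)) : 2 ∣ p * q := by
  rw [Int.even_add] at h
  rw [← even_iff_two_dvd, Int.even_mul]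
  tauto

theorem four_dvd_mul_mul_of_even_add (hpq : Even (p + q)) (hst : Even (s + t))
    (hps : ¬Even (p + s)) : 4 ∣ p * q * (s * t) := by
  rw [Int.even_add] at hpq hst hps
  by_cases hp : Even p
  · exact (mul_dvd_mul hp.two_dvd (hpq.mp hp).two_dvd).mul_right _
  · have hs : Even s := by tauto
    exact (mul_dvd_mul hs.two_dvd (hst.mp hs).two_dvd).mul_left _

theorem sum_sq_emod_eight_eq_two (hpq : Even (p + q)) (hst : Even (s + t)) (hps : ¬Even (p + s))
    (h8 : ¬8 ∣ p * q * (s * t)) : (p ^ 2 + q ^ 2 + (s ^ 2 + t ^ 2)) % 8 = 2 := by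
  wlog hp : Even p generalizing p q s t
  · rw [add_comm (p ^ 2 + q ^ 2)]
    refine this hst hpq (by rwa [add_comm]) (by rwa [mul_comm]) ?_
    rw [Int.even_add] at hps
    tauto
  rw [Int.even_add] at hpq hst hps
  obtain ⟨k, rfl⟩ := hp.two_dvd
  obtain ⟨l, rfl⟩ := (hpq.mp hp).two_dvd
  have hk : Odd (k * l) := by
    by_contra hkl
    obtain ⟨m, hm⟩ := Int.not_odd_iff_even.mp hkl
    exact h8 ⟨m * (s * t), by linear_combination 4 * s * t * hm⟩
  have hs : Odd s := by grind
  have ht : Odd t := by grind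
  have hk' := Int.eight_dvd_sq_sub_one_of_odd (Int.odd_mul.mp hk).1
  have hl' := Int.eight_dvd_sq_sub_one_of_odd (Int.odd_mul.mp hk).2
  have hs' := Int.eight_dvd_sq_sub_one_of_odd hs
  have ht' := Int.eight_dvd_sq_sub_one_of_odd ht
  rw [mul_pow, mul_pow]
  omega

end Congruences

section CharacterTable

variable {G R ι : Type*} [AddCommGroup G] [Fintype G] [CommRing R] [IsDomain R]

theorem det_addChar_ne_zero [DecidableEq G] {χ : G → AddChar G R} (hχ : χ.Injective) :
    (of fun i u => χ i u).det ≠ 0 := by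
  intro hdet
  obtain ⟨c, hc, hsum⟩ := exists_vecMul_eq_zero_iff.mpr hdet
  have hind := (linearIndependent_monoidHom (Multiplicative G) R).comp
    (fun i => (χ i).toMonoidHom) (AddChar.toMonoidHomEquiv.injective.comp hχ)
  refine hc (funext (Fintype.linearIndependent_iff.mp hind c (funext fun u => ?_)))
  simpa [vecMul, dotProduct] using congrFun hsum u.toAdd

variable [Fintype ι] {χ : ι → AddChar G R}

theorem det_circulant_eq_prod [DecidableEq G] (hχ : χ.Injective)
    (hcard : Fintype.card ι = Fintype.card G) (a : G → R) :
    (circulant a).det = ∏ i, ∑ u, a u * χ i u := by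
  let e : G ≃ ι := Fintype.equivOfCardEq hcard.symm
  let T : Matrix G G R := of fun i u => χ (e i) u
  have hmul : T * circulant a = diagonal (fun i => ∑ u, a u * χ (e i) u) * T := by
    ext i v
    rw [diagonal_mul, mul_apply, sum_mul, ← Equiv.sum_comp (Equiv.addRight v)]
    refine sum_congr rfl fun u _ => ?_
    simp only [T, of_apply, circulant_apply, Equiv.coe_addRight, add_sub_cancel_right,
      AddChar.map_add_eq_mul]
    ring
  have hdet := congrArg det hmul
  rw [det_mul, det_mul, det_diagonal, mul_comm] at hdet
  rw [mul_right_cancel₀ (det_addChar_ne_zero (hχ.comp e.injective)) hdet,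
    e.prod_comp fun i => ∑ u, a u * χ i u]

theorem sum_addChar_apply [DecidableEq G] (hχ : χ.Injective)
    (hcard : Fintype.card ι = Fintype.card G) (v : G) :
    ∑ i, χ i v = if v = 0 then (Fintype.card G : R) else 0 := by
  classical
  let e : G ≃ ι := Fintype.equivOfCardEq hcard.symm
  let D : G → R := fun v => ∑ i, χ i v - if v = 0 then (Fintype.card G : R) else 0
  suffices hD : (of fun i u => (χ (e i))⁻¹ u) *ᵥ D = 0 from
    sub_eq_zero.mp (congrFun (eq_zero_of_mulVec_eq_zero
      (det_addChar_ne_zero (inv_injective.comp (hχ.comp e.injective))) hD) v)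
  ext i
  have hrow (j : ι) : ∑ u, χ (e i) (-u) * χ j u =
      if χ j = χ (e i) then (Fintype.card G : R) else 0 := by
    simpa only [AddChar.div_apply, ← AddChar.one_eq_zero, div_eq_one, mul_comm] using
      AddChar.sum_eq_ite (χ j / χ (e i))
  simp [D, mulVec, dotProduct, mul_sub, sum_sub_distrib, mul_sum, sum_comm (t := univ (α := ι)),
    hrow, hχ.eq_iff]

end CharacterTable

section GaussianInt

theorem norm_eq_sq_add_sq (z : GaussianInt) : z.norm = z.re ^ 2 + z.im ^ 2 := by
  rw [Zsqrtd.norm_def]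
  ring

theorem even_norm_iff {z : GaussianInt} : Even z.norm ↔ (Even z.re ↔ Even z.im) := by
  simp only [norm_eq_sq_add_sq, Int.even_add, Int.even_pow' two_ne_zero]

theorem norm_emod_four_eq_one_of_odd {z : GaussianInt} (hz : Odd z.norm) : z.norm % 4 = 1 := by
  rw [norm_eq_sq_add_sq, Int.odd_iff] at hz
  rw [norm_eq_sq_add_sq]
  obtain ⟨k, hk | hk⟩ := Int.even_or_odd' z.re <;>
    obtain ⟨l, hl | hl⟩ := Int.even_or_odd' z.im <;>
      rw [hk, hl] at hz ⊢ <;> ring_nf at hz ⊢ <;> omega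

theorem exists_norm_emod_eight_eq_five {ι : Type*} {s : Finset ι} {f : ι → GaussianInt}
    (hodd : ∀ i ∈ s, Odd (f i).norm) (hsum : ¬∑ i ∈ s, (f i).norm ≡ #s [ZMOD 8]) :
    ∃ i ∈ s, (f i).norm % 8 = 5 := by
  by_contra! hne
  refine hsum ?_
  rw [card_eq_sum_ones, Nat.cast_sum]
  refine Int.ModEq.sum fun i hi => ?_
  have h4 := norm_emod_four_eq_one_of_odd (hodd i hi)
  have h5 := hne i hi
  change _ % 8 = 1 % 8
  omega

theorem four_dvd_norm_of_two_dvd {z : GaussianInt} (h : 2 ∣ z) : 4 ∣ z.norm := by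
  obtain ⟨w, rfl⟩ := h
  exact ⟨w.norm, Zsqrtd.norm_mul _ _⟩

theorem norm_add_norm_emod_four_eq_three {z w : GaussianInt} (hzw : ¬Even (z.norm + w.norm))
    (h4 : ¬4 ∣ z.norm * w.norm) : (z.norm + w.norm) % 4 = 3 := by
  wlog hz : Even z.norm generalizing z w
  · rw [add_comm]
    exact this (by rwa [add_comm]) (by rwa [mul_comm]) (by grind)
  have hw := norm_emod_four_eq_one_of_odd (z := w) (by grind)
  obtain ⟨k, hk⟩ := hz.two_dvd
  have hk_odd : Odd k := by
    by_contra hk_even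
    obtain ⟨l, hl⟩ := Int.not_odd_iff_even.mp hk_even
    exact h4 ⟨l * w.norm, by rw [hk, hl]; ring⟩
  rw [Int.odd_iff] at hk_odd
  omega

theorem one_add_sqrtd_dvd_iff {z : GaussianInt} : 1 + sqrtd ∣ z ↔ Even z.norm := by
  constructor
  · rintro ⟨w, rfl⟩
    rw [Zsqrtd.norm_mul]
    exact (show Even (1 + sqrtd : GaussianInt).norm by decide).mul_right _
  · intro h
    obtain ⟨k, hk⟩ : Even (z.re + z.im) := Int.even_add.mpr (even_norm_iff.mp h)
    refine ⟨⟨k, k - z.re⟩, Zsqrtd.ext ?_ ?_⟩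
    · simp only [Zsqrtd.re_mul, Zsqrtd.re_add, Zsqrtd.im_add, Zsqrtd.re_one, Zsqrtd.im_one,
        Zsqrtd.re_sqrtd, Zsqrtd.im_sqrtd]
      ring
    · simp only [Zsqrtd.im_mul, Zsqrtd.re_add, Zsqrtd.im_add, Zsqrtd.re_one, Zsqrtd.im_one,
        Zsqrtd.re_sqrtd, Zsqrtd.im_sqrtd]
      linear_combination hk

theorem norm_eq_one_of_isUnit {z : GaussianInt} (hz : IsUnit z) : z.norm = 1 :=
  (Zsqrtd.norm_eq_one_iff' (by norm_num) z).mpr hz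

theorem sq_eq_one_or_neg_one_of_isUnit {z : GaussianInt} (hz : IsUnit z) :
    z ^ 2 = 1 ∨ z ^ 2 = -1 := by
  have hnorm : z.re ^ 2 + z.im ^ 2 = 1 := by
    rw [← norm_eq_sq_add_sq, norm_eq_one_of_isUnit hz]
  have haxis : z.re = 0 ∨ z.im = 0 := by
    by_contra! h
    obtain ⟨hre, him⟩ := h
    have hre' : 0 < z.re ^ 2 := by positivity
    have him' : 0 < z.im ^ 2 := by positivity
    omega
  have hsq : z ^ 2 = ⟨z.re ^ 2 - z.im ^ 2, 2 * (z.re * z.im)⟩ := by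
    ext
    · rw [sq, Zsqrtd.re_mul]
      ring
    · rw [sq, Zsqrtd.im_mul]
      ring
  rw [hsq]
  rcases haxis with h | h <;> rw [h] at hnorm ⊢
  · exact Or.inr (Zsqrtd.ext (by rw [Zsqrtd.re_neg, Zsqrtd.re_one]; linarith) (by simp))
  · exact Or.inl (Zsqrtd.ext (by rw [Zsqrtd.re_one]; linarith) (by simp))

theorem two_dvd_one_sub_sq {z : GaussianInt} (hz : IsUnit z) : 2 ∣ 1 - z ^ 2 := by
  rcases sq_eq_one_or_neg_one_of_isUnit hz with h | h <;> rw [h] <;> norm_num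

theorem one_add_sqrtd_dvd_sub_iff {z w : GaussianInt} :
    1 + sqrtd ∣ z - w ↔ Even (z.norm + w.norm) := by
  rw [one_add_sqrtd_dvd_iff, Int.even_add, even_norm_iff, even_norm_iff, even_norm_iff,
    Zsqrtd.re_sub, Zsqrtd.im_sub, Int.even_sub, Int.even_sub]
  tauto

theorem one_add_sqrtd_dvd_sub_of_isUnit {z w : GaussianInt} (hz : IsUnit z) (hw : IsUnit w) :
    1 + sqrtd ∣ z - w := by
  rw [one_add_sqrtd_dvd_sub_iff, norm_eq_one_of_isUnit hz, norm_eq_one_of_isUnit hw]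
  decide

theorem one_add_sqrtd_dvd_intCast {n : ℤ} : 1 + sqrtd ∣ (n : GaussianInt) ↔ Even n := by
  rw [one_add_sqrtd_dvd_iff, Zsqrtd.norm_intCast, Int.even_mul, or_self]

theorem star_eq_of_mul_eq_one {z w : GaussianInt} (h : z * w = 1) : star z = w := by
  calc star z = (z * w) * star z := by rw [h, one_mul]
    _ = z.norm * w := by rw [Zsqrtd.norm_eq_mul_conj]; ring
    _ = w := by simp [norm_eq_one_of_isUnit (IsUnit.of_mul_eq_one w h)]

variable {G : Type*} [AddCommGroup G]

theorem addChar_pow_four (χ : AddChar G GaussianInt) : χ ^ 4 = 1 := by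
  ext1 u
  rw [AddChar.pow_apply, AddChar.one_apply, show 4 = 2 * 2 from rfl, pow_mul]
  rcases sq_eq_one_or_neg_one_of_isUnit (χ.val_isUnit u) with h | h <;> rw [h] <;> norm_num

theorem inv_pow_mul_pow (χ ψ : AddChar G GaussianInt) {j k m n : ℕ} (hm : j + m = 4)
    (hn : k + n = 4) : (χ ^ j * ψ ^ k)⁻¹ = χ ^ m * ψ ^ n := by
  rw [inv_eq_iff_mul_eq_one, mul_mul_mul_comm, ← pow_add, ← pow_add, hm, hn, addChar_pow_four,
    addChar_pow_four, one_mul]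

end GaussianInt

section Fourier

variable {G : Type*} [AddCommGroup G] [Fintype G]

/-- The Fourier transform of an integer-valued function on a finite abelian group, at a character
with values in the Gaussian integers. -/
def fourier (a : G → ℤ) (χ : AddChar G GaussianInt) : GaussianInt := ∑ u, a u * χ u

variable (a : G → ℤ) (χ ψ : AddChar G GaussianInt)

theorem fourier_inv : fourier a χ⁻¹ = star (fourier a χ) := by
  simp only [fourier, star_sum, star_mul', AddChar.inv_apply]
  refine sum_congr rfl fun u _ => ?_
  rw [star_eq_of_mul_eq_one (z := χ u) (w := χ (-u)) (by simp [← AddChar.map_add_eq_mul])]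
  simp

theorem norm_fourier_inv : (fourier a χ⁻¹).norm = (fourier a χ).norm := by
  rw [fourier_inv, Zsqrtd.norm_conj]

theorem fourier_mul_fourier_inv : fourier a χ * fourier a χ⁻¹ = (fourier a χ).norm := by
  rw [fourier_inv, Zsqrtd.norm_eq_mul_conj]

theorem even_norm_fourier_iff : Even (fourier a χ).norm ↔ Even (fourier a ψ).norm := by
  rw [← Int.even_add, ← one_add_sqrtd_dvd_sub_iff, fourier, fourier, ← sum_sub_distrib]
  refine dvd_sum fun u _ => ?_
  rw [← mul_sub]
  exact (one_add_sqrtd_dvd_sub_of_isUnit (χ.val_isUnit u) (ψ.val_isUnit u)).mul_left _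

theorem two_mul_one_add_sqrtd_dvd_fourier :
    2 * (1 + sqrtd) ∣
      fourier a χ - fourier a (χ * ψ ^ 2) - (fourier a 1 - fourier a (ψ ^ 2)) := by
  have hterm : fourier a χ - fourier a (χ * ψ ^ 2) - (fourier a 1 - fourier a (ψ ^ 2)) =
      ∑ u, a u * ((1 - ψ u ^ 2) * (χ u - 1)) := by
    simp only [fourier, ← sum_sub_distrib]
    refine sum_congr rfl fun u _ => ?_
    simp only [AddChar.mul_apply, AddChar.pow_apply, AddChar.one_apply]
    ring
  rw [hterm]
  refine dvd_sum fun u _ => (mul_dvd_mul ?_ ?_).mul_left _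
  · exact two_dvd_one_sub_sq (ψ.val_isUnit u)
  · exact one_add_sqrtd_dvd_sub_of_isUnit (χ.val_isUnit u) isUnit_one

variable {a}

theorem exists_fourier_sq_eq_two_mul (h : Even (fourier a (χ ^ 2)).norm) :
    ∃ r : ℤ, fourier a (χ ^ 2) = 2 * r := by
  have hinv : (χ ^ 2)⁻¹ = χ ^ 2 := by
    rw [inv_eq_iff_mul_eq_one, ← pow_add, addChar_pow_four]
  have him : (fourier a (χ ^ 2)).im = 0 := by
    have hstar := congrArg Zsqrtd.im (fourier_inv a (χ ^ 2))
    rw [hinv, Zsqrtd.im_star] at hstar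
    linarith
  obtain ⟨r, hr⟩ : Even (fourier a (χ ^ 2)).re := by simpa [even_norm_iff, him] using h
  refine ⟨r, Zsqrtd.ext ?_ ?_⟩
  · simp [hr, two_mul]
  · simp [him]

theorem even_sum_of_fourier_sq_eq {r : AddChar G GaussianInt → ℤ}
    (hr : ∀ χ, fourier a (χ ^ 2) = 2 * r χ) : Even (r χ + r (χ * ψ) + (r 1 + r ψ)) := by
  have h := two_mul_one_add_sqrtd_dvd_fourier a (χ ^ 2) ψ
  have hr₁ := hr 1
  rw [one_pow] at hr₁
  rw [← mul_pow, hr₁, hr, hr, hr, ← mul_sub, ← mul_sub, ← mul_sub,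
    mul_dvd_mul_iff_left two_ne_zero, ← Int.cast_sub, ← Int.cast_sub, ← Int.cast_sub,
    one_add_sqrtd_dvd_intCast] at h
  simpa only [Int.even_sub, Int.even_add] using h

variable {χ ψ}

theorem two_dvd_fourier {r₁ r : ℤ} (hr₁ : fourier a 1 = 2 * r₁) (hr : fourier a (χ ^ 2) = 2 * r)
    (heven : Even (r₁ + r)) (hnorm : Even (fourier a χ).norm) : 2 ∣ fourier a χ := by
  have h := two_mul_one_add_sqrtd_dvd_fourier a χ χ
  have hinv : χ * χ ^ 2 = χ⁻¹ := by
    rw [eq_inv_iff_mul_eq_one, ← pow_succ', ← pow_succ, addChar_pow_four]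
  have hstar : fourier a χ - star (fourier a χ) =
      2 * (((fourier a χ).im : GaussianInt) * sqrtd) := by
    ext <;> simp [two_mul]
  rw [hinv, fourier_inv, hstar, hr₁, hr, ← mul_sub, ← mul_sub,
    mul_dvd_mul_iff_left two_ne_zero, ← Int.cast_sub] at h
  have him : Even (fourier a χ).im := by
    have hsub : 1 + sqrtd ∣ ((r₁ - r : ℤ) : GaussianInt) := by
      rwa [one_add_sqrtd_dvd_intCast, Int.even_sub, ← Int.even_add]
    have him := (dvd_iff_dvd_of_dvd_sub h).mpr hsub
    rw [one_add_sqrtd_dvd_iff, even_norm_iff] at him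
    simpa using him
  have hre : Even (fourier a χ).re := (even_norm_iff.mp hnorm).mpr him
  exact (Zsqrtd.intCast_dvd 2 _).mpr ⟨hre.two_dvd, him.two_dvd⟩

theorem even_norm_add_norm_iff {r₁ r : ℤ} (hr₁ : fourier a 1 = 2 * r₁)
    (hr : fourier a (ψ ^ 2) = 2 * r) {z w : GaussianInt} (hz : fourier a χ = 2 * z)
    (hw : fourier a (χ * ψ ^ 2) = 2 * w) : Even (z.norm + w.norm) ↔ Even (r₁ + r) := by
  have h := two_mul_one_add_sqrtd_dvd_fourier a χ ψ
  rw [hz, hw, hr₁, hr, ← mul_sub, ← mul_sub, ← mul_sub,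
    mul_dvd_mul_iff_left two_ne_zero] at h
  rw [← one_add_sqrtd_dvd_sub_iff, dvd_iff_dvd_of_dvd_sub h, ← Int.cast_sub,
    one_add_sqrtd_dvd_intCast, Int.even_sub, Int.even_add]

variable {ι : Type*} [Fintype ι] {ξ : ι → AddChar G GaussianInt}

theorem sum_norm_fourier_mul (hξ : ξ.Injective) (hcard : Fintype.card ι = Fintype.card G)
    (v : G) :
    ∑ i, ((fourier a (ξ i)).norm : GaussianInt) * ξ i v =
      Fintype.card G * ∑ u, (a u * a (u + v) : ℤ) := by
  classical
  have hnorm (i : ι) : ((fourier a (ξ i)).norm : GaussianInt) * ξ i v =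
      ∑ u, ∑ w, a u * a w * ξ i (u - w + v) := by
    rw [← fourier_mul_fourier_inv, fourier, fourier, sum_mul_sum, sum_mul]
    refine sum_congr rfl fun u _ => ?_
    rw [sum_mul]
    refine sum_congr rfl fun w _ => ?_
    rw [AddChar.inv_apply, sub_eq_add_neg, AddChar.map_add_eq_mul, AddChar.map_add_eq_mul]
    ring
  calc ∑ i, ((fourier a (ξ i)).norm : GaussianInt) * ξ i v
      = ∑ u, ∑ w, (a u * a w : GaussianInt) * ∑ i, ξ i (u - w + v) := by
        simp only [hnorm, mul_sum]
        rw [sum_comm]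
        exact sum_congr rfl fun u _ => sum_comm
    _ = ∑ u, ∑ w, if w = u + v then (a u * a w : GaussianInt) * Fintype.card G else 0 := by
        refine sum_congr rfl fun u _ => sum_congr rfl fun w _ => ?_
        simp only [sum_addChar_apply hξ hcard, mul_ite, mul_zero, sub_add_eq_add_sub, sub_eq_zero,
          eq_comm (a := w)]
    _ = Fintype.card G * ∑ u, (a u * a (u + v) : ℤ) := by
        simp [mul_sum, mul_comm]

theorem intCast_det_circulant [DecidableEq G] (hξ : ξ.Injective)
    (hcard : Fintype.card ι = Fintype.card G) :
    ((circulant a).det : GaussianInt) = ∏ i, fourier a (ξ i) := by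
  rw [Int.cast_det, map_circulant]
  exact det_circulant_eq_prod hξ hcard _

theorem even_norm_fourier_of_even_det [DecidableEq G] (hξ : ξ.Injective)
    (hcard : Fintype.card ι = Fintype.card G) (hdet : Even (circulant a).det)
    (χ : AddChar G GaussianInt) : Even (fourier a χ).norm := by
  have hprod : ∏ i, (fourier a (ξ i)).norm = (circulant a).det * (circulant a).det := by
    rw [← Zsqrtd.norm_intCast (d := -1), intCast_det_circulant hξ hcard]
    exact (map_prod Zsqrtd.normMonoidHom _ _).symm
  have hdvd : 2 ∣ ∏ i, (fourier a (ξ i)).norm := hprod ▸ hdet.two_dvd.mul_right _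
  obtain ⟨i, -, hi⟩ := Int.prime_two.exists_mem_finset_dvd hdvd
  exact (even_norm_fourier_iff a χ (ξ i)).mpr (even_iff_two_dvd.mpr hi)

theorem even_sum_mul_shift {v : G} (hv : v ≠ 0) (hvv : v + v = 0) :
    Even (∑ u, a u * a (u + v)) := by
  rw [← ZMod.intCast_eq_zero_iff_even, Int.cast_sum]
  refine sum_involution (fun u _ => u + v) (fun u _ => ?_) (fun u _ _ => ?_)
    (fun _ _ => mem_univ _) fun u _ => ?_
  · rw [add_assoc, hvv, add_zero, mul_comm (a (u + v)), CharTwo.add_self_eq_zero]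
  · simpa using hv
  · rw [add_assoc, hvv, add_zero]

end Fourier

section DualBasis

variable {G : Type*} [AddCommGroup G] [Fintype G]

/-- The elements `x`, `y` and the characters `φ`, `ω` identify the group `G` with `C₄ ⊕ C₄`: the
characters are the two coordinates with respect to `x` and `y`, with `C₄` embedded in the Gaussian
integers as the fourth roots of unity (`sqrtd` is the imaginary unit). -/
structure IsDualBasis (x y : G) (φ ω : AddChar G GaussianInt) : Prop where
  card_eq : Fintype.card G = 16
  fst_left : φ x = sqrtd
  fst_right : φ y = 1
  snd_left : ω x = 1
  snd_right : ω y = sqrtd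

namespace IsDualBasis

variable {x y : G} {φ ω : AddChar G GaussianInt}

theorem swap (h : IsDualBasis x y φ ω) : IsDualBasis y x ω φ :=
  ⟨h.card_eq, h.snd_right, h.snd_left, h.fst_right, h.fst_left⟩

theorem shear (h : IsDualBasis x y φ ω) : IsDualBasis x (y + 3 • x) (φ * ω) ω where
  card_eq := h.card_eq
  fst_left := by rw [AddChar.mul_apply, h.fst_left, h.snd_left, mul_one]
  fst_right := by
    rw [AddChar.mul_apply, AddChar.map_add_eq_mul, AddChar.map_add_eq_mul, AddChar.map_nsmul_eq_pow,
      AddChar.map_nsmul_eq_pow, h.fst_left, h.fst_right, h.snd_left, h.snd_right]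
    decide
  snd_left := h.snd_left
  snd_right := by
    rw [AddChar.map_add_eq_mul, AddChar.map_nsmul_eq_pow, h.snd_left, h.snd_right, one_pow, mul_one]

theorem injective_pow_mul_pow (h : IsDualBasis x y φ ω) :
    Function.Injective fun p : Fin 4 × Fin 4 => φ ^ (p.1 : ℕ) * ω ^ (p.2 : ℕ) := by
  have hsqrtd : Function.Injective fun j : Fin 4 => (sqrtd : GaussianInt) ^ (j : ℕ) := by decide
  intro p q hpq
  have hx := DFunLike.congr_fun hpq x
  have hy := DFunLike.congr_fun hpq y
  simp only [AddChar.mul_apply, AddChar.pow_apply, h.fst_left, h.fst_right, h.snd_left,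
    h.snd_right, one_pow, mul_one, one_mul] at hx hy
  exact Prod.ext (hsqrtd hx) (hsqrtd hy)

theorem card_fin_prod_fin (h : IsDualBasis x y φ ω) :
    Fintype.card (Fin 4 × Fin 4) = Fintype.card G := by
  rw [h.card_eq]
  rfl

theorem four_nsmul_eq_zero (h : IsDualBasis x y φ ω) (u : G) : 4 • u = 0 := by
  classical
  have hsum := sum_addChar_apply h.injective_pow_mul_pow h.card_fin_prod_fin (4 • u)
  by_contra hu
  rw [if_neg hu] at hsum
  simp only [AddChar.map_nsmul_eq_pow, ← AddChar.pow_apply, addChar_pow_four] at hsum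
  simp at hsum

theorem det_circulant_eq [DecidableEq G] (h : IsDualBasis x y φ ω) (a : G → ℤ) :
    ((circulant a).det : GaussianInt) =
      fourier a 1 * fourier a (φ ^ 2) * fourier a (ω ^ 2) * fourier a ((φ * ω) ^ 2) *
        ((fourier a φ).norm * (fourier a (φ * ω ^ 2)).norm *
          ((fourier a ω).norm * (fourier a (ω * φ ^ 2)).norm *
            ((fourier a (φ * ω)).norm * (fourier a (φ * ω * ω ^ 2)).norm))) := by
  have hpair (j k : ℕ) {m n : ℕ} (hm : j + m = 4) (hn : k + n = 4) :
      ((fourier a (φ ^ j * ω ^ k)).norm : GaussianInt) =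
        fourier a (φ ^ j * ω ^ k) * fourier a (φ ^ m * ω ^ n) := by
    rw [← fourier_mul_fourier_inv, inv_pow_mul_pow φ ω hm hn]
  have h₁₀ := hpair 1 0 (m := 3) (n := 4) rfl rfl
  have h₁₂ := hpair 1 2 (m := 3) (n := 2) rfl rfl
  have h₀₁ := hpair 0 1 (m := 4) (n := 3) rfl rfl
  have h₂₁ := hpair 2 1 (m := 2) (n := 3) rfl rfl
  have h₁₁ := hpair 1 1 (m := 3) (n := 3) rfl rfl
  have h₁₃ := hpair 1 3 (m := 3) (n := 1) rfl rfl
  simp only [pow_zero, pow_one, one_mul, mul_one, addChar_pow_four] at h₁₀ h₁₂ h₀₁ h₂₁ h₁₁ h₁₃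
  rw [intCast_det_circulant h.injective_pow_mul_pow h.card_fin_prod_fin, Fintype.prod_prod_type,
    mul_pow, mul_assoc φ, ← pow_succ', mul_comm ω (φ ^ 2), h₁₀, h₁₂, h₀₁, h₂₁, h₁₁, h₁₃]
  simp only [Fin.prod_univ_four, Fin.isValue, Fin.coe_ofNat_eq_mod, Nat.zero_mod, Nat.one_mod,
    Nat.reduceMod, Nat.mod_succ, pow_zero, pow_one, mul_one, one_mul]
  ring

theorem two_nsmul_ne_zero (h : IsDualBasis x y φ ω) : 2 • y ≠ 0 := by
  intro hzero
  have hω := congrArg ω hzero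
  rw [AddChar.map_nsmul_eq_pow, h.snd_right, AddChar.map_zero_eq_one] at hω
  exact absurd hω (by decide)

theorem pow_mul_pow_apply_two_nsmul (h : IsDualBasis x y φ ω) (m n : ℕ) :
    (φ ^ m * ω ^ n) (2 • y) = ((-1) ^ n : ℤ) := by
  rw [AddChar.mul_apply, AddChar.pow_apply, AddChar.pow_apply, AddChar.map_nsmul_eq_pow,
    AddChar.map_nsmul_eq_pow, h.fst_right, h.snd_right, one_pow, one_pow, one_mul,
    show (sqrtd : GaussianInt) ^ 2 = -1 from rfl, Int.cast_pow, Int.cast_neg, Int.cast_one]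

theorem sum_norm_fourier_mul_neg_one_pow (h : IsDualBasis x y φ ω) (a : G → ℤ) :
    ∑ p : Fin 4 × Fin 4, (fourier a (φ ^ (p.1 : ℕ) * ω ^ (p.2 : ℕ))).norm * (-1) ^ (p.2 : ℕ) =
      16 * ∑ u, a u * a (u + 2 • y) := by
  have hsum := sum_norm_fourier_mul (a := a) h.injective_pow_mul_pow h.card_fin_prod_fin (2 • y)
  simp only [h.pow_mul_pow_apply_two_nsmul, h.card_eq] at hsum
  exact_mod_cast hsum

theorem dvd_sum_norm_fourier (h : IsDualBasis x y φ ω) (a : G → ℤ) :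
    32 ∣ (fourier a 1).norm + (fourier a (φ ^ 2)).norm + (fourier a (ω ^ 2)).norm +
      (fourier a ((φ * ω) ^ 2)).norm +
      2 * ((fourier a φ).norm + (fourier a (φ * ω ^ 2)).norm) -
      2 * ((fourier a ω).norm + (fourier a (ω * φ ^ 2)).norm +
        ((fourier a (φ * ω)).norm + (fourier a (φ * ω * ω ^ 2)).norm)) := by
  obtain ⟨k, hk⟩ := even_sum_mul_shift (a := a) h.two_nsmul_ne_zero
    (by rw [← add_nsmul, h.four_nsmul_eq_zero])
  have hnorm (j k : ℕ) {m n : ℕ} (hm : j + m = 4) (hn : k + n = 4) :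
      (fourier a (φ ^ m * ω ^ n)).norm = (fourier a (φ ^ j * ω ^ k)).norm := by
    rw [← inv_pow_mul_pow φ ω hm hn, norm_fourier_inv]
  have h₁₀ := hnorm 1 0 (m := 3) (n := 4) rfl rfl
  have h₁₂ := hnorm 1 2 (m := 3) (n := 2) rfl rfl
  have h₀₁ := hnorm 0 1 (m := 4) (n := 3) rfl rfl
  have h₂₁ := hnorm 2 1 (m := 2) (n := 3) rfl rfl
  have h₁₁ := hnorm 1 1 (m := 3) (n := 3) rfl rfl
  have h₁₃ := hnorm 1 3 (m := 3) (n := 1) rfl rfl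
  have hsum := h.sum_norm_fourier_mul_neg_one_pow a
  rw [hk] at hsum
  simp only [Fintype.sum_prod_type, Fin.sum_univ_four, Fin.isValue, Fin.coe_ofNat_eq_mod,
    Nat.zero_mod, Nat.one_mod, Nat.reduceMod, Nat.mod_succ, pow_zero, pow_one, mul_one, one_mul]
    at hsum
  simp only [pow_zero, pow_one, one_mul, mul_one, addChar_pow_four] at h₁₀ h₁₂ h₀₁ h₂₁ h₁₁ h₁₃
  rw [h₁₀, h₁₂, h₀₁, h₂₁, h₁₁, h₁₃] at hsum
  refine ⟨k, ?_⟩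
  rw [mul_pow, mul_assoc φ, ← pow_succ', mul_comm ω (φ ^ 2)]
  linear_combination hsum

theorem det_circulant_eq_of_fourier_sq [DecidableEq G] (h : IsDualBasis x y φ ω) {a : G → ℤ}
    {r : AddChar G GaussianInt → ℤ} (hr : ∀ χ, fourier a (χ ^ 2) = 2 * r χ) :
    (circulant a).det = 16 * (r 1 * r φ * (r ω * r (φ * ω))) *
        ((fourier a φ).norm * (fourier a (φ * ω ^ 2)).norm *
          ((fourier a ω).norm * (fourier a (ω * φ ^ 2)).norm *
            ((fourier a (φ * ω)).norm * (fourier a (φ * ω * ω ^ 2)).norm))) := by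
  have hdet := h.det_circulant_eq a
  have hr₁ := hr 1
  rw [one_pow] at hr₁
  rw [hr₁, hr, hr, hr] at hdet
  rw [← Int.cast_inj (α := GaussianInt), hdet]
  push_cast
  ring

theorem two_pow_sixteen_dvd_det_of_even [DecidableEq G] (h : IsDualBasis x y φ ω) {a : G → ℤ}
    {r : AddChar G GaussianInt → ℤ} (hr : ∀ χ, fourier a (χ ^ 2) = 2 * r χ)
    (heven : ∀ χ, Even (fourier a χ).norm) (hφ : Even (r 1 + r φ)) (hω : Even (r 1 + r ω)) :
    2 ^ 16 ∣ (circulant a).det := by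
  have hr₁ := hr 1
  rw [one_pow] at hr₁
  have hφω : Even (r 1 + r (φ * ω)) := by
    have := even_sum_of_fourier_sq_eq φ ω hr
    grind
  have hfour {χ ψ : AddChar G GaussianInt} (hψ : Even (r 1 + r ψ)) (hsq : χ ^ 2 = ψ ^ 2) :
      4 ∣ (fourier a χ).norm :=
    four_dvd_norm_of_two_dvd (two_dvd_fourier hr₁ (hsq ▸ hr ψ) hψ (heven χ))
  have hsq (χ ψ : AddChar G GaussianInt) : (χ * ψ ^ 2) ^ 2 = χ ^ 2 := by
    rw [mul_pow, ← pow_mul, addChar_pow_four, mul_one]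
  rw [h.det_circulant_eq_of_fourier_sq hr]
  have hnorms := mul_dvd_mul (mul_dvd_mul (hfour hφ rfl) (hfour hφ (hsq φ ω)))
    (mul_dvd_mul (mul_dvd_mul (hfour hω rfl) (hfour hω (hsq ω φ)))
      (mul_dvd_mul (hfour hφω rfl) (hfour hφω (hsq (φ * ω) ω))))
  exact mul_dvd_mul (dvd_mul_right 16 _) hnorms

theorem exists_det_circulant_eq_two_pow_twelve_mul [DecidableEq G] (h : IsDualBasis x y φ ω)
    {a : G → ℤ} {r : AddChar G GaussianInt → ℤ} (hr : ∀ χ, fourier a (χ ^ 2) = 2 * r χ)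
    (heven : ∀ χ, Even (fourier a χ).norm) (hφ : Even (r 1 + r φ)) (hω : ¬Even (r 1 + r ω)) :
    ∃ (z w : GaussianInt) (f : Fin 4 → GaussianInt),
      (circulant a).det =
        2 ^ 12 * (r 1 * r φ * (r ω * r (φ * ω)) * (z.norm * w.norm) * ∏ j, (f j).norm) ∧
      ¬Even (z.norm + w.norm) ∧
      r 1 ^ 2 + r φ ^ 2 + (r ω ^ 2 + r (φ * ω) ^ 2) + 2 * (z.norm + w.norm) ≡
        ∑ j, (f j).norm [ZMOD 8] := by
  have hr₁ := hr 1
  rw [one_pow] at hr₁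
  obtain ⟨z, hz⟩ := two_dvd_fourier hr₁ (hr φ) hφ (heven φ)
  obtain ⟨w, hw⟩ := two_dvd_fourier (χ := φ * ω ^ 2) (r := r φ) hr₁
    (by rw [mul_pow, ← pow_mul, addChar_pow_four, mul_one, hr]) hφ (heven _)
  obtain ⟨z₁, hz₁⟩ := one_add_sqrtd_dvd_iff.mpr (heven ω)
  obtain ⟨z₂, hz₂⟩ := one_add_sqrtd_dvd_iff.mpr (heven (ω * φ ^ 2))
  obtain ⟨z₃, hz₃⟩ := one_add_sqrtd_dvd_iff.mpr (heven (φ * ω))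
  obtain ⟨z₄, hz₄⟩ := one_add_sqrtd_dvd_iff.mpr (heven (φ * ω * ω ^ 2))
  have hsum := h.dvd_sum_norm_fourier a
  have hdet := h.det_circulant_eq_of_fourier_sq hr
  rw [hr₁, hr, hr, hr] at hsum
  simp only [hz, hw, hz₁, hz₂, hz₃, hz₄, Zsqrtd.norm_mul, Zsqrtd.norm_intCast,
    show (2 : GaussianInt).norm = 4 from rfl, show (1 + sqrtd : GaussianInt).norm = 2 from rfl]
    at hdet hsum
  refine ⟨z, w, ![z₁, z₂, z₃, z₄], ?_, by rwa [even_norm_add_norm_iff hr₁ (hr ω) hz hw], ?_⟩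
  · simp only [Fin.prod_univ_four, Fin.isValue, Matrix.cons_val]
    linear_combination hdet
  · obtain ⟨k, hk⟩ := hsum
    simp only [Fin.sum_univ_four, Fin.isValue, Matrix.cons_val]
    exact Int.modEq_iff_dvd.mpr ⟨-k, by linarith⟩

theorem two_pow_sixteen_dvd_det_or_exists_norm_of_not_even [DecidableEq G] (h : IsDualBasis x y φ ω)
    {a : G → ℤ} {r : AddChar G GaussianInt → ℤ} (hr : ∀ χ, fourier a (χ ^ 2) = 2 * r χ)
    (heven : ∀ χ, Even (fourier a χ).norm) (hφ : Even (r 1 + r φ)) (hω : ¬Even (r 1 + r ω)) :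
    2 ^ 16 ∣ (circulant a).det ∨ 2 ^ 15 ∣ (circulant a).det ∧
      ∃ z : GaussianInt, z.norm ∣ (circulant a).det ∧ z.norm % 8 = 5 := by
  have hφω : Even (r ω + r (φ * ω)) := by
    have := even_sum_of_fourier_sq_eq φ ω hr
    grind
  obtain ⟨z, w, f, hdet, hzw, hsum⟩ := h.exists_det_circulant_eq_two_pow_twelve_mul hr heven hφ hω
  set ρ := r 1 * r φ * (r ω * r (φ * ω))
  have hρ : 4 ∣ ρ := four_dvd_mul_mul_of_even_add hφ hφω hω
  have hzw₂ : 2 ∣ z.norm * w.norm := two_dvd_mul_of_not_even_add hzw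
  refine or_iff_not_imp_left.mpr fun h16 => ?_
  rw [hdet] at h16 ⊢
  refine ⟨mul_dvd_mul_left (2 ^ 12) ((mul_dvd_mul hρ hzw₂).mul_right _), ?_⟩
  have hρ₈ : ¬8 ∣ ρ := fun h8 =>
    h16 (mul_dvd_mul_left (2 ^ 12) ((mul_dvd_mul h8 hzw₂).mul_right _))
  have hzw₄ : ¬4 ∣ z.norm * w.norm := fun h4 =>
    h16 (mul_dvd_mul_left (2 ^ 12) ((mul_dvd_mul hρ h4).mul_right _))
  have hdvd (j : Fin 4) : (f j).norm ∣ ∏ j, (f j).norm := dvd_prod_of_mem _ (mem_univ j)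
  have hodd (j : Fin 4) : Odd (f j).norm := by
    refine Int.not_even_iff_odd.mp fun hj => h16 ?_
    exact mul_dvd_mul_left (2 ^ 12) (mul_dvd_mul (mul_dvd_mul hρ hzw₂) (hj.two_dvd.trans (hdvd j)))
  have hsq := sum_sq_emod_eight_eq_two hφ hφω hω hρ₈
  have hnorm := norm_add_norm_emod_four_eq_three hzw hzw₄
  -- the left side of `hsum` is now `2 + 2 * 3` modulo `8`, so the four odd norms cannot all be `1`
  obtain ⟨j, -, hj⟩ := exists_norm_emod_eight_eq_five (s := univ) (fun j _ => hodd j) <| by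
    rw [card_univ, Fintype.card_fin, Int.ModEq, ← hsum]
    omega
  exact ⟨f j, (hdvd j).mul_left _ |>.mul_left _, hj⟩

theorem two_pow_sixteen_dvd_det_or_exists_norm [DecidableEq G] (h : IsDualBasis x y φ ω) {a : G → ℤ}
    (hdet : Even (circulant a).det) :
    2 ^ 16 ∣ (circulant a).det ∨ 2 ^ 15 ∣ (circulant a).det ∧
      ∃ z : GaussianInt, z.norm ∣ (circulant a).det ∧ z.norm % 8 = 5 := by
  have heven := even_norm_fourier_of_even_det h.injective_pow_mul_pow h.card_fin_prod_fin hdet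
  choose r hr using fun χ => exists_fourier_sq_eq_two_mul χ (heven (χ ^ 2))
  by_cases hφ : Even (r 1 + r φ) <;> by_cases hω : Even (r 1 + r ω)
  · exact Or.inl (h.two_pow_sixteen_dvd_det_of_even hr heven hφ hω)
  · exact h.two_pow_sixteen_dvd_det_or_exists_norm_of_not_even hr heven hφ hω
  · exact h.swap.two_pow_sixteen_dvd_det_or_exists_norm_of_not_even hr heven hω hφ
  · have hφω : Even (r 1 + r (φ * ω)) := by
      have := even_sum_of_fourier_sq_eq φ ω hr
      grind
    exact h.shear.two_pow_sixteen_dvd_det_or_exists_norm_of_not_even hr heven hφω hω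

end IsDualBasis

end DualBasis

section SumOfTwoSquares

theorem exists_prime_dvd_not_modEq_one {m n : ℕ} (hn₀ : n ≠ 0) (hn : ¬n ≡ 1 [MOD m]) :
    ∃ p, p.Prime ∧ p ∣ n ∧ ¬p ≡ 1 [MOD m] := by
  by_contra! h
  refine hn ?_
  rw [← Nat.prod_primeFactorsList hn₀]
  refine List.prod_induction (· ≡ 1 [MOD m]) (fun _ _ ha hb => ha.mul hb) rfl fun p hp => ?_
  exact h p (Nat.prime_of_mem_primeFactorsList hp) (Nat.dvd_of_mem_primeFactorsList hp)

theorem exists_prime_dvd_sq_add_sq {m n : ℕ} (h : (m ^ 2 + n ^ 2) % 8 = 5) :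
    ∃ p, p.Prime ∧ p ∣ m ^ 2 + n ^ 2 ∧ p % 8 = 5 := by
  obtain ⟨a, b, hab, hb⟩ := Nat.eq_sq_add_sq_iff_eq_sq_mul.mp ⟨m, n, rfl⟩
  rw [hab] at h ⊢
  have hodd : Odd (a ^ 2 * b) := Nat.odd_iff.mpr (by omega)
  rw [Nat.odd_mul, Nat.odd_pow_iff two_ne_zero] at hodd
  have hb₅ : b % 8 = 5 := by
    have hsq : 1 ≡ a ^ 2 [MOD 8] :=
      (Nat.modEq_iff_dvd' hodd.1.pow.pos).mpr (Nat.eight_dvd_sq_sub_one_of_odd hodd.1)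
    have hmul := hsq.mul_right b
    rw [one_mul] at hmul
    exact Eq.trans hmul h
  have hb₀ : b ≠ 0 := hodd.2.pos.ne'
  obtain ⟨p, hp, hpb, hp₁⟩ := exists_prime_dvd_not_modEq_one (m := 8) hb₀ (by simp [Nat.ModEq, hb₅])
  refine ⟨p, hp, hpb.mul_left _, ?_⟩
  have hp₂ := Nat.odd_iff.mp (hodd.2.of_dvd_nat hpb)
  have hp₃ := Nat.mod_four_ne_three_of_mem_primeFactors_of_isSquare_neg_one
    (Nat.mem_primeFactors.mpr ⟨hp, hpb, hb₀⟩) hb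
  rw [Nat.ModEq] at hp₁
  omega

theorem exists_mem_Pset_dvd_norm {z : GaussianInt} (hz : z.norm % 8 = 5) :
    ∃ p ∈ Pset, p ∣ z.norm := by
  have hnorm : ((z.re.natAbs ^ 2 + z.im.natAbs ^ 2 : ℕ) : ℤ) = z.norm := by
    simp [norm_eq_sq_add_sq]
  rw [← hnorm] at hz ⊢
  obtain ⟨p, hp, hdvd, hp₅⟩ := exists_prime_dvd_sq_add_sq (by exact_mod_cast hz)
  refine ⟨p, ⟨Nat.prime_iff_prime_int.mp hp, mod_cast hp.pos, ?_⟩, mod_cast hdvd⟩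
  change (p : ℤ) % 8 = 5
  exact_mod_cast hp₅

theorem isCoprime_two_of_mem_Pset {p : ℤ} (hp : p ∈ Pset) : IsCoprime p 2 := by
  have hmod : p % 8 = 5 := hp.2.2
  exact (Int.isCoprime_two_left.mpr (Int.odd_iff.mpr (by omega))).symm

end SumOfTwoSquares

theorem exists_isDualBasis :
    ∃ (x y : ZMod 4 × ZMod 4) (φ ω : AddChar (ZMod 4 × ZMod 4) GaussianInt),
      IsDualBasis x y φ ω := by
  have hsqrtd : (sqrtd : GaussianInt) ^ 4 = 1 := by decide
  let χ : AddChar (ZMod 4) GaussianInt := AddChar.zmodChar 4 hsqrtd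
  have h₀ : χ 0 = 1 := χ.map_zero_eq_one
  have h₁ : χ 1 = sqrtd := pow_one sqrtd
  exact ⟨(1, 0), (0, 1), χ.compAddMonoidHom (AddMonoidHom.fst _ _),
    χ.compAddMonoidHom (AddMonoidHom.snd _ _), rfl, h₁, h₀, h₀, h₁⟩

theorem two_pow_sixteen_dvd_or_of_mem_S44 {n : ℤ} (hn : n ∈ S44) (heven : Even n) :
    2 ^ 16 ∣ n ∨ 2 ^ 15 ∣ n ∧ ∃ p ∈ Pset, p ∣ n := by
  obtain ⟨a, rfl⟩ := hn
  obtain ⟨_, _, _, _, hbasis⟩ := exists_isDualBasis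
  refine (hbasis.two_pow_sixteen_dvd_det_or_exists_norm heven).imp_right (And.imp_right ?_)
  rintro ⟨z, hdvd, hz⟩
  obtain ⟨p, hp, hpz⟩ := exists_mem_Pset_dvd_norm hz
  exact ⟨p, hp, hpz.trans hdvd⟩

end IntegerGroupDet

theorem stmt15 :
    (∀ x ∈ S44, Even x → (2 ^ 15 : ℤ) ∣ x) ∧
    (∀ x ∈ S44, (∃ t : ℤ, Odd t ∧ x = 2 ^ 15 * t) →
      ∃ p ∈ Pset, ∃ m : ℤ, x = 2 ^ 15 * p * (2 * m + 1)) := by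
  constructor
  · intro x hx heven
    rcases IntegerGroupDet.two_pow_sixteen_dvd_or_of_mem_S44 hx heven with h16 | ⟨h15, -⟩
    · exact (pow_dvd_pow 2 (Nat.le_succ 15)).trans h16
    · exact h15
  · rintro _ hx ⟨t, ht, rfl⟩
    have heven : Even (2 ^ 15 * t) := (even_two.pow_of_ne_zero (by norm_num)).mul_right t
    rcases IntegerGroupDet.two_pow_sixteen_dvd_or_of_mem_S44 hx heven with h16 | ⟨-, p, hp, hpt⟩
    · rw [pow_succ, mul_dvd_mul_iff_left (by norm_num), ← even_iff_two_dvd] at h16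
      exact absurd h16 (Int.not_even_iff_odd.mpr ht)
    · have hcop := (IntegerGroupDet.isCoprime_two_of_mem_Pset hp).pow_right (n := 15)
      obtain ⟨u, rfl⟩ := hcop.dvd_of_dvd_mul_left hpt
      obtain ⟨m, rfl⟩ := (Int.odd_mul.mp ht).2
      exact ⟨p, hp, m, (mul_assoc _ _ _).symm⟩
end
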